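/- arXiv:0910.0237 — 2 statements merged into one kernel-verified Lean document; each statement's English description precedes it below -/
import Mathlib

section
/- Every finitely presented system (Y,f) admits a Smale space extension with a u-resolving factor map: there exists a Smale space (X,F) and a factor map π₊ : X → Y which is injective on every unstable set of X. -/
open Filter Topology Set

/-- `f` is expansive with expansive constant `c`. -/
def Expansive {X : Type*} [MetricSpace X] (f : Equiv.Perm X) (c : ℝ) : Prop :=
  ∀ p q : X, p ≠ q → ∃ n : ℤ, c < dist ((f ^ n) p) ((f ^ n) q)

/-- The ε-stable set of `x`. -/
def Ws {X : Type*} [MetricSpace X] (f : Equiv.Perm X) (ε : ℝ) (x : X) : Set X :=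
  {y | ∀ n : ℕ, dist ((f ^ (n : ℤ)) x) ((f ^ (n : ℤ)) y) < ε}

/-- The ε-unstable set of `x`. -/
def Wu {X : Type*} [MetricSpace X] (f : Equiv.Perm X) (ε : ℝ) (x : X) : Set X :=
  {y | ∀ n : ℕ, dist ((f ^ (-(n : ℤ))) x) ((f ^ (-(n : ℤ))) y) < ε}

/-- The stable set of `x`. -/
def stableSet {X : Type*} [MetricSpace X] (f : Equiv.Perm X) (x : X) : Set X :=
  {y | Filter.Tendsto (fun n : ℕ => dist ((f ^ (n : ℤ)) x) ((f ^ (n : ℤ)) y))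
    Filter.atTop (nhds 0)}

/-- The unstable set of `x`. -/
def unstableSet {X : Type*} [MetricSpace X] (f : Equiv.Perm X) (x : X) : Set X :=
  {y | Filter.Tendsto (fun n : ℕ => dist ((f ^ (-(n : ℤ))) x) ((f ^ (-(n : ℤ))) y))
    Filter.atTop (nhds 0)}

/-- Canonical coordinates: for all sufficiently small ε > 0 there is δ > 0 such that
points at distance < δ have a unique bracket `[x,y] = W^s_ε(x) ∩ W^u_ε(y)`. -/
def CanonicalCoords {X : Type*} [MetricSpace X] (f : Equiv.Perm X) : Prop :=
  ∃ ε₀ > 0, ∀ ε : ℝ, 0 < ε → ε ≤ ε₀ → ∃ δ > 0, ∀ x y : X, dist x y < δ →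
    ∃! z, z ∈ Ws f ε x ∩ Wu f ε y

/-- A Smale space: an expansive homeomorphism with canonical coordinates. -/
def IsSmale {X : Type*} [MetricSpace X] (f : Equiv.Perm X) : Prop :=
  Continuous (⇑f) ∧ Continuous (⇑f.symm) ∧ (∃ c > 0, Expansive f c) ∧ CanonicalCoords f

/-- Topological transitivity. -/
def TopTransitive {X : Type*} [MetricSpace X] (f : Equiv.Perm X) : Prop :=
  ∀ U V : Set X, IsOpen U → IsOpen V → U.Nonempty → V.Nonempty →
    ∃ n : ℕ, ((f ^ (n : ℤ)) ⁻¹' U ∩ V).Nonempty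

/-- A periodic point of `f`. -/
def IsPeriodicPoint {X : Type*} [MetricSpace X] (f : Equiv.Perm X) (p : X) : Prop :=
  ∃ N : ℕ, 0 < N ∧ (f ^ (N : ℤ)) p = p

/-- A factor map (surjective continuous semiconjugacy). -/
def IsFactorMap {X Y : Type*} [MetricSpace X] [MetricSpace Y]
    (F : Equiv.Perm X) (f : Equiv.Perm Y) (π : X → Y) : Prop :=
  Continuous π ∧ Function.Surjective π ∧ ∀ x, π (F x) = f (π x)

/-- A map is u-resolving if it is injective on unstable sets. -/
def UResolving {X Y : Type*} [MetricSpace X] (F : Equiv.Perm X) (π : X → Y) : Prop :=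
  ∀ x : X, Set.InjOn π (unstableSet F x)

/-- A map is s-resolving if it is injective on stable sets. -/
def SResolving {X Y : Type*} [MetricSpace X] (F : Equiv.Perm X) (π : X → Y) : Prop :=
  ∀ x : X, Set.InjOn π (stableSet F x)

/-- The shift map on bi-infinite sequences. -/
def shiftE (A : Type*) : Equiv.Perm (ℤ → A) where
  toFun x i := x (i + 1)
  invFun x i := x (i - 1)
  left_inv x := funext fun i => congrArg x (by ring)
  right_inv x := funext fun i => congrArg x (by ring)

/-- The word `w` occurs in the sequence `x`. -/
def OccursIn {A : Type*} {k : ℕ} (w : Fin k → A) (x : ℤ → A) : Prop :=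
  ∃ i : ℤ, ∀ j : Fin k, x (i + (j : ℤ)) = w j

/-- A subshift of finite type: the sequences avoiding a finite set of forbidden words. -/
def IsSFT {A : Type*} (S : Set (ℤ → A)) : Prop :=
  ∃ Fw : Set ((k : ℕ) × (Fin k → A)), Fw.Finite ∧
    S = {x | ∀ w ∈ Fw, ¬ OccursIn w.2 x}

/-- A one-step SFT (vertex shift) with transition rule `T`. -/
def IsOneStepSFTFor {A : Type*} (T : A → A → Prop) (S : Set (ℤ → A)) : Prop :=
  S = {x | ∀ i : ℤ, T (x i) (x (i + 1))}

/-- `S` is invariant under the shift and its inverse. -/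
def ShiftInvariant {A : Type*} (S : Set (ℤ → A)) : Prop :=
  (∀ x ∈ S, shiftE A x ∈ S) ∧ (∀ x ∈ S, (shiftE A).symm x ∈ S)

/-- A factor map from the subshift `(S, σ)` onto the system `(Y, f)`. -/
def IsSubshiftFactorMap {A Y : Type*} [TopologicalSpace A] [MetricSpace Y]
    (S : Set (ℤ → A)) (f : Equiv.Perm Y) (φ : (ℤ → A) → Y) : Prop :=
  ContinuousOn φ S ∧ φ '' S = Set.univ ∧ ∀ x ∈ S, φ (shiftE A x) = f (φ x)

/-- Topological transitivity of the shift restricted to `S`. -/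
def SubshiftTransitive {A : Type*} [TopologicalSpace A] (S : Set (ℤ → A)) : Prop :=
  ∀ U V : Set (ℤ → A), IsOpen U → IsOpen V → (U ∩ S).Nonempty → (V ∩ S).Nonempty →
    ∃ n : ℕ, (((shiftE A) ^ (n : ℤ)) ⁻¹' U ∩ V ∩ S).Nonempty

/-- The stable set of `t` in the subshift `S`: points eventually agreeing with `t`. -/
def shiftStable {A : Type*} (S : Set (ℤ → A)) (t : ℤ → A) : Set (ℤ → A) :=
  {t' ∈ S | ∃ N : ℤ, ∀ i ≥ N, t' i = t i}

/-- A finitely presented system: an expansive system that is a factor of an SFT. -/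
def FinitelyPresented {Y : Type*} [MetricSpace Y] (f : Equiv.Perm Y) : Prop :=
  Continuous (⇑f) ∧ Continuous (⇑f.symm) ∧ (∃ c > 0, Expansive f c) ∧
  ∃ (N : ℕ) (S : Set (ℤ → Fin N)), IsSFT S ∧ ShiftInvariant S ∧ S.Nonempty ∧
    ∃ φ : (ℤ → Fin N) → Y, IsSubshiftFactorMap S f φ


namespace FPS

/-- Distance between the `i`-th iterates. -/
def D {Y : Type*} [MetricSpace Y] (f : Equiv.Perm Y) (i : ℤ) (p q : Y) : ℝ :=
  dist ((f ^ i) p) ((f ^ i) q)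

section basic
variable {Y : Type*} [MetricSpace Y] {f : Equiv.Perm Y}

lemma D_comm (i : ℤ) (p q : Y) : D f i p q = D f i q p := dist_comm _ _

lemma D_tri (i : ℤ) (p q r : Y) : D f i p r ≤ D f i p q + D f i q r := dist_triangle _ _ _

lemma D_self (i : ℤ) (p : Y) : D f i p p = 0 := dist_self _

lemma D_zero (p q : Y) : D f 0 p q = dist p q := by simp [D]

lemma D_shift (i k : ℤ) (p q : Y) : D f i ((f ^ k) p) ((f ^ k) q) = D f (i + k) p q := by
  simp only [D, zpow_add, Equiv.Perm.mul_apply]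

/-- closeness in the past of time `n`. -/
def UB (f : Equiv.Perm Y) (r : ℝ) (n : ℤ) (p q : Y) : Prop := ∀ i ≤ n, D f i p q ≤ r

/-- closeness in the future of time `n`. -/
def SB (f : Equiv.Perm Y) (r : ℝ) (n : ℤ) (p q : Y) : Prop := ∀ i ≥ n, D f i p q ≤ r

/-- closeness in the window `[-N, N]`. -/
def CB (f : Equiv.Perm Y) (r : ℝ) (N : ℤ) (p q : Y) : Prop :=
  ∀ i, -N ≤ i → i ≤ N → D f i p q ≤ r

lemma UB_shift (r : ℝ) (n k : ℤ) (p q : Y) :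
    UB f r n ((f ^ k) p) ((f ^ k) q) ↔ UB f r (n + k) p q := by
  constructor
  · intro h i hi
    have := h (i - k) (by lia)
    rwa [D_shift, sub_add_cancel] at this
  · intro h i hi
    rw [D_shift]
    exact h _ (by lia)

lemma SB_shift (r : ℝ) (n k : ℤ) (p q : Y) :
    SB f r n ((f ^ k) p) ((f ^ k) q) ↔ SB f r (n + k) p q := by
  constructor
  · intro h i hi
    have := h (i - k) (by lia)
    rwa [D_shift, sub_add_cancel] at this
  · intro h i hi
    rw [D_shift]
    exact h _ (by lia)

lemma UB.mono {r r' : ℝ} {n n' : ℤ} {p q : Y} (h : UB f r n p q) (hr : r ≤ r') (hn : n' ≤ n) :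
    UB f r' n' p q := fun i hi => (h i (hi.trans hn)).trans hr

lemma UB.symm {r : ℝ} {n : ℤ} {p q : Y} (h : UB f r n p q) : UB f r n q p :=
  fun i hi => D_comm (f := f) i p q ▸ h i hi

lemma SB.symm {r : ℝ} {n : ℤ} {p q : Y} (h : SB f r n p q) : SB f r n q p :=
  fun i hi => D_comm (f := f) i p q ▸ h i hi

lemma CB.symm {r : ℝ} {n : ℤ} {p q : Y} (h : CB f r n p q) : CB f r n q p :=
  fun i hi hi' => D_comm (f := f) i p q ▸ h i hi hi'

lemma UB.trans {r r' : ℝ} {n : ℤ} {p q w : Y} (h : UB f r n p q) (h' : UB f r' n q w) :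
    UB f (r + r') n p w :=
  fun i hi => (D_tri i p q w).trans (add_le_add (h i hi) (h' i hi))

lemma SB.trans {r r' : ℝ} {n : ℤ} {p q w : Y} (h : SB f r n p q) (h' : SB f r' n q w) :
    SB f (r + r') n p w :=
  fun i hi => (D_tri i p q w).trans (add_le_add (h i hi) (h' i hi))

lemma CB.mono {r r' : ℝ} {n n' : ℤ} {p q : Y} (h : CB f r n p q) (hr : r ≤ r') (hn : n' ≤ n) :
    CB f r' n' p q := fun i hi hi' => (h i (by lia) (by lia)).trans hr

lemma CB_refl {r : ℝ} (hr : 0 ≤ r) (n : ℤ) (p : Y) : CB f r n p p :=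
  fun i _ _ => by rw [D_self]; exact hr

lemma UB_refl {r : ℝ} (hr : 0 ≤ r) (n : ℤ) (p : Y) : UB f r n p p :=
  fun i _ => by rw [D_self]; exact hr

lemma zpow_cont (h1 : Continuous f) (h2 : Continuous f.symm) (i : ℤ) :
    Continuous (⇑(f ^ i)) := by
  have hn : ∀ (g : Equiv.Perm Y), Continuous g → ∀ n : ℕ, Continuous (⇑(g ^ n)) := by
    intro g hg n
    induction n with
    | zero => simpa using continuous_id
    | succ k ih => rw [pow_succ]; exact ih.comp hg
  cases i with
  | ofNat n => simpa using hn f h1 n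
  | negSucc n =>
    rw [zpow_negSucc, ← inv_pow]
    exact hn _ h2 _

end basic

/-- All the data used in the construction. -/
structure Setup {Y : Type} [MetricSpace Y] (f : Equiv.Perm Y) {A : ℕ} (S : Set (ℤ → Fin A))
    (φ : (ℤ → Fin A) → Y) (e : ℝ) (M L : ℕ) : Prop where
  he : 0 < e
  hf : Continuous f
  hf' : Continuous f.symm
  exp : ∀ p q, (∀ i, D f i p q ≤ 100 * e) → p = q
  uexp : ∀ δ > 0, ∃ N : ℕ, ∀ p q, CB f (50 * e) N p q → dist p q < δ
  contr : ∀ p q, CB f (50 * e) M p q → dist p q ≤ e / 4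
  hS : IsClosed S
  hφ : ContinuousOn φ S
  surj : ∀ y, ∃ s ∈ S, φ s = y
  shS : ∀ s ∈ S, ∀ k : ℤ, (fun i => s (i + k)) ∈ S
  shφ : ∀ s ∈ S, ∀ k : ℤ, φ (fun i => s (i + k)) = (f ^ k) (φ s)
  loc : ∀ s ∈ S, ∀ t ∈ S, (∀ i : ℤ, -L ≤ i → i ≤ L → s i = t i) → dist (φ s) (φ t) ≤ e
  spl : ∀ s ∈ S, ∀ t ∈ S, ∀ k : ℤ, (∀ i : ℤ, k - L ≤ i → i ≤ k + L → s i = t i) →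
    (fun i => if i ≤ k then s i else t i) ∈ S

lemma uexp_aux {Y : Type} [MetricSpace Y] [CompactSpace Y] {f : Equiv.Perm Y}
    (h1 : Continuous f) (h2 : Continuous f.symm) {c : ℝ}
    (hc : ∀ p q, (∀ i, D f i p q ≤ c) → p = q) (δ : ℝ) (hδ : 0 < δ) :
    ∃ N : ℕ, ∀ p q, CB f c N p q → dist p q < δ := by
  by_contra! h
  choose p q h hd using h
  obtain ⟨⟨a, b⟩, -, g, hg, hlim⟩ :=
    (isCompact_univ (X := Y × Y)).tendsto_subseq (x := fun n => (p n, q n)) (fun _ => mem_univ _)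
  have hlim' : ∀ F : Y × Y → ℝ, Continuous F →
      Tendsto (fun n => F (p (g n), q (g n))) atTop (𝓝 (F (a, b))) := fun F hF =>
    (hF.tendsto (a, b)).comp hlim
  have hab : a = b := by
    apply hc
    intro i
    have hcont : Continuous (fun x : Y × Y => D f i x.1 x.2) := by
      have := zpow_cont h1 h2 i
      unfold D
      fun_prop
    refine le_of_tendsto (hlim' _ hcont) ?_
    filter_upwards [eventually_ge_atTop i.natAbs] with n hn
    have := hg.id_le n
    simp only [id] at this
    exact h (g n) i (by lia) (by lia)
  have h3 := hlim' (fun x => dist x.1 x.2) (by fun_prop)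
  have h4 : δ ≤ dist a b := ge_of_tendsto' h3 (fun n => hd (g n))
  rw [hab, dist_self] at h4
  linarith

lemma shift_zpow {A : Type*} (k : ℤ) (s : ℤ → A) : ((shiftE A) ^ k) s = fun i => s (i + k) := by
  have hn : ∀ (n : ℕ) (s : ℤ → A), ((shiftE A) ^ n) s = fun i => s (i + n) := by
    intro n
    induction n with
    | zero => intro s; simp
    | succ k ih =>
      intro s
      rw [pow_succ, Equiv.Perm.mul_apply, ih]
      funext i
      show s (i + k + 1) = _
      congr 1
      push_cast
      ring
  cases k with
  | ofNat n => simpa using hn n s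
  | negSucc n =>
    rw [zpow_negSucc]
    rw [Equiv.Perm.inv_eq_iff_eq]
    rw [hn]
    funext i
    congr 1
    rw [Int.negSucc_eq]
    push_cast
    ring

lemma setup_of {Y : Type} [MetricSpace Y] [CompactSpace Y] {f : Equiv.Perm Y}
    (hY : FinitelyPresented f) : ∃ (A : ℕ) (S : Set (ℤ → Fin A)) (φ : (ℤ → Fin A) → Y) (e : ℝ)
      (M L : ℕ), Setup f S φ e M L := by
  obtain ⟨h1, h2, ⟨c, hc, hexp⟩, A, S, ⟨Fw, hFw, hSF⟩, ⟨hi1, hi2⟩, -, φ, hφ, hsurj, hcomm⟩ := hY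
  have hexp' : ∀ p q, (∀ i, D f i p q ≤ c) → p = q := by
    intro p q h
    by_contra hne
    obtain ⟨n, hn⟩ := hexp p q hne
    exact absurd (h n) (not_le.2 hn)
  obtain ⟨e, he, hec⟩ : ∃ e : ℝ, 0 < e ∧ 100 * e = c := ⟨c / 100, by positivity, by ring⟩
  have huexp : ∀ δ > 0, ∃ N : ℕ, ∀ p q, CB f (50 * e) N p q → dist p q < δ := by
    intro δ hδ
    obtain ⟨N, hN⟩ := uexp_aux h1 h2 hexp' δ hδ
    exact ⟨N, fun p q h => hN p q (h.mono (by linarith) le_rfl)⟩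
  obtain ⟨M, hM⟩ := huexp (e / 4) (by positivity)
  have hSclosed : IsClosed S := by
    rw [hSF]
    simp only [ofPred_forall]
    refine isClosed_biInter fun w _ => ?_
    have : {x : ℤ → Fin A | ¬ OccursIn w.2 x} =
        ⋂ i : ℤ, {x | ¬ ∀ j : Fin w.1, x (i + (j : ℤ)) = w.2 j} := by
      ext x; simp [OccursIn]
    rw [this]
    refine isClosed_iInter fun i => ?_
    have : {x : ℤ → Fin A | ¬ ∀ j : Fin w.1, x (i + (j : ℤ)) = w.2 j} =
       (⋂ j : Fin w.1, {x : ℤ → Fin A | x (i + (j : ℤ)) = w.2 j})ᶜ := by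
      ext x; simp
    rw [this, isClosed_compl_iff]
    refine isOpen_iInter_of_finite fun j => ?_
    have hcj : Continuous (fun x : ℤ → Fin A => x (i + (j : ℤ))) := continuous_apply _
    exact (isOpen_discrete ({w.2 j} : Set (Fin A))).preimage hcj
  have hzS : ∀ s ∈ S, ∀ k : ℤ, (fun i => s (i + k)) ∈ S := by
    intro s hs k
    rw [← shift_zpow]
    induction k with
    | zero => simpa using hs
    | succ i ih => 
      rw [add_comm, zpow_add, zpow_one]; exact hi1 _ ih
    | pred i ih =>
      rw [sub_eq_add_neg, add_comm, zpow_add, zpow_neg_one]; exact hi2 _ ih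
  have hzφ : ∀ s ∈ S, ∀ k : ℤ, φ (fun i => s (i + k)) = (f ^ k) (φ s) := by
    intro s hs k
    have hin : ∀ k : ℤ, ((shiftE (Fin A)) ^ k) s ∈ S := by
      intro k; rw [shift_zpow]; exact hzS s hs k
    rw [← shift_zpow]
    induction k with
    | zero => simp
    | succ i ih => 
      rw [add_comm, zpow_add, zpow_one, Equiv.Perm.mul_apply, hcomm _ (hin _), ih, zpow_add,
        zpow_one, Equiv.Perm.mul_apply]
    | pred i ih =>
      apply f.injective
      rw [← hcomm _ (hin _)]
      rw [← Equiv.Perm.mul_apply, ← zpow_one_add, ← Equiv.Perm.mul_apply f, ← zpow_one_add]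
      simpa using ih
  obtain ⟨L1, hL1⟩ : ∃ L1 : ℕ, ∀ s ∈ S, ∀ t ∈ S, (∀ i : ℤ, -L1 ≤ i → i ≤ L1 → s i = t i) →
      dist (φ s) (φ t) ≤ e := by
    by_contra! h
    choose s hs t ht hst hd using h
    obtain ⟨a, ha, g, hg, hlim⟩ := hSclosed.isCompact.tendsto_subseq hs
    have hlim2 : Tendsto (t ∘ g) atTop (𝓝 a) := by
      rw [tendsto_pi_nhds] at hlim ⊢
      intro i
      refine (hlim i).congr' ?_
      filter_upwards [eventually_ge_atTop i.natAbs] with n hn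
      have := hg.id_le n
      simp only [id] at this
      exact hst (g n) i (by lia) (by lia)
    have e1 : Tendsto (fun n => φ (s (g n))) atTop (𝓝 (φ a)) :=
      (hφ a ha).tendsto.comp (tendsto_nhdsWithin_iff.2 ⟨hlim, Eventually.of_forall fun n => hs _⟩)
    have e2 : Tendsto (fun n => φ (t (g n))) atTop (𝓝 (φ a)) :=
      (hφ a ha).tendsto.comp (tendsto_nhdsWithin_iff.2 ⟨hlim2, Eventually.of_forall fun n => ht _⟩)
    have e3 := ge_of_tendsto' (e1.dist e2) (fun n => (hd (g n)).le)
    rw [dist_self] at e3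
    linarith
  obtain ⟨L2, hL2⟩ : ∃ L2 : ℕ, ∀ w ∈ Fw, w.1 ≤ L2 := by
    obtain ⟨b, hb⟩ := (hFw.image (fun w => w.1)).bddAbove
    exact ⟨b, fun w hw => hb ⟨w, hw, rfl⟩⟩
  refine ⟨A, S, φ, e, M, L1 + L2, ⟨he, h1, h2, ?_, huexp, fun p q h => (hM p q h).le, hSclosed, hφ,
    ?_, hzS, hzφ, ?_, ?_⟩⟩
  · rw [hec]; exact hexp'
  · intro y
    have : y ∈ φ '' S := hsurj ▸ mem_univ y
    exact this
  · intro s hs t ht h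
    exact hL1 s hs t ht fun i hi hi' => h i (by push_cast; lia) (by push_cast; lia)
  · intro s hs t ht k hst
    rw [hSF] at hs ht ⊢
    rintro w hw ⟨i, hi⟩
    have hwl := hL2 w hw
    by_cases hik : i + L2 ≤ k + (L1 + L2 : ℕ)
    · refine hs w hw ⟨i, fun j => ?_⟩
      rw [← hi j]
      have := j.2
      by_cases hj : i + j ≤ k
      · simp [hj]
      · simp only [hj, if_false]
        exact hst _ (by push_cast; lia) (by push_cast at *; lia)
    · refine ht w hw ⟨i, fun j => ?_⟩
      rw [← hi j]
      have := j.2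
      by_cases hj : i + j ≤ k
      · simp only [hj, if_true]
        exact (hst _ (by push_cast at *; lia) (by push_cast at *; lia)).symm
      · simp [hj]

section main
variable {Y : Type} [MetricSpace Y] {f : Equiv.Perm Y} {A : ℕ} {S : Set (ℤ → Fin A)}
  {φ : (ℤ → Fin A) → Y} {e : ℝ} {M L : ℕ}

lemma Setup.contrAt (h : Setup f S φ e M L) {p q : Y} (k : ℤ)
    (hd : ∀ i, k - M ≤ i → i ≤ k + M → D f i p q ≤ 50 * e) : D f k p q ≤ e / 4 := by
  have := h.contr ((f ^ k) p) ((f ^ k) q) (fun i hi hi' => by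
    rw [D_shift]; exact hd _ (by lia) (by lia))
  exact this

lemma Setup.UBc (h : Setup f S φ e M L) {p q : Y} {r : ℝ} {n : ℤ} (hd : UB f r n p q)
    (hr : r ≤ 50 * e) : UB f (e / 4) (n - M) p q := fun k hk =>
  h.contrAt k fun i _ hi' => (hd i (by lia)).trans hr

lemma Setup.SBc (h : Setup f S φ e M L) {p q : Y} {r : ℝ} {n : ℤ} (hd : SB f r n p q)
    (hr : r ≤ 50 * e) : SB f (e / 4) (n + M) p q := fun k hk =>
  h.contrAt k fun i hi _ => (hd i (by lia)).trans hr

lemma Setup.CBc (h : Setup f S φ e M L) {p q : Y} {r : ℝ} {n n' : ℤ} (hd : CB f r n p q)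
    (hr : r ≤ 50 * e) (hn : n' + M ≤ n) : CB f (e / 4) n' p q := fun k hk hk' =>
  h.contrAt k fun i hi hi' => (hd i (by lia) (by lia)).trans hr

lemma Setup.eqOf (h : Setup f S φ e M L) {p q : Y} {r r' : ℝ} {n : ℤ} (hu : UB f r n p q)
    (hs : SB f r' n p q) (hr : r ≤ 100 * e) (hr' : r' ≤ 100 * e) : p = q := by
  apply h.exp
  intro i
  rcases le_total i n with hi | hi
  · exact (hu i hi).trans hr
  · exact (hs i hi).trans hr'

lemma Setup.locAt (h : Setup f S φ e M L) {s t : ℤ → Fin A} (hs : s ∈ S) (ht : t ∈ S) (k : ℤ)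
    (hst : ∀ i : ℤ, k - L ≤ i → i ≤ k + L → s i = t i) : D f k (φ s) (φ t) ≤ e := by
  have := h.loc _ (h.shS s hs k) _ (h.shS t ht k) (fun i hi hi' => hst _ (by lia) (by lia))
  rw [h.shφ s hs, h.shφ t ht] at this
  exact this

lemma Setup.agreeUB (h : Setup f S φ e M L) {s t : ℤ → Fin A} (hs : s ∈ S) (ht : t ∈ S) (k : ℤ)
    (hst : ∀ i : ℤ, i ≤ k + L → s i = t i) : UB f e k (φ s) (φ t) := fun i hi =>
  h.locAt hs ht i fun j _ hj => hst j (by lia)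

lemma Setup.agreeSB (h : Setup f S φ e M L) {s t : ℤ → Fin A} (hs : s ∈ S) (ht : t ∈ S) (k : ℤ)
    (hst : ∀ i : ℤ, k - L ≤ i → s i = t i) : SB f e k (φ s) (φ t) := fun i hi =>
  h.locAt hs ht i fun j hj _ => hst j (by lia)

/-- Existence of the splice of two sequences agreeing on a window. -/
lemma Setup.splice (h : Setup f S φ e M L) {s t : ℤ → Fin A} (hs : s ∈ S) (ht : t ∈ S) (k : ℤ)
    (hst : ∀ i : ℤ, k - L ≤ i → i ≤ k + L → s i = t i) :
    ∃ u ∈ S, (∀ i ≤ k + L, u i = s i) ∧ (∀ i ≥ k - L, u i = t i) := by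
  refine ⟨_, h.spl s hs t ht k hst, fun i hi => ?_, fun i hi => ?_⟩
  · by_cases hik : i ≤ k
    · simp [hik]
    · simp only [hik, if_false]
      exact (hst i (by lia) hi).symm
  · by_cases hik : i ≤ k
    · simp only [hik, if_true]
      exact hst i hi (by lia)
    · simp [hik]

/-- `s` is admissible for `K`: the image of its unstable set is contained in `K`. -/
def Adm (S : Set (ℤ → Fin A)) (φ : (ℤ → Fin A) → Y) (K : Set Y) (s : ℤ → Fin A) : Prop :=
  s ∈ S ∧ ∀ t ∈ S, ∀ m : ℤ, (∀ i ≤ m, t i = s i) → φ t ∈ K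

/-- Points of the extension. -/
def IsPt (f : Equiv.Perm Y) (S : Set (ℤ → Fin A)) (φ : (ℤ → Fin A) → Y) (e : ℝ)
    (y : Y) (K : Set Y) : Prop :=
  y ∈ K ∧ (∀ z ∈ K, ∃ n : ℤ, UB f e n z y) ∧ ∀ z ∈ K, ∃ s, Adm S φ K s ∧ φ s = z

lemma Setup.rebase (h : Setup f S φ e M L) {y z : Y} {K : Set Y} (hx : IsPt f S φ e y K)
    (hz : z ∈ K) : IsPt f S φ e z K := by
  obtain ⟨h1, h2, h3⟩ := hx
  have he := h.he
  refine ⟨hz, fun v hv => ?_, h3⟩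
  obtain ⟨n, hn⟩ := h2 v hv
  obtain ⟨m, hm⟩ := h2 z hz
  refine ⟨min n m - M, (h.UBc ((hn.mono le_rfl (min_le_left n m)).trans
    (hm.symm.mono le_rfl (min_le_right n m))) (by linarith)).mono (by linarith) le_rfl⟩

lemma Setup.maximal (h : Setup f S φ e M L) (y : Y) :
    IsPt f S φ e y {z | ∃ n : ℤ, UB f e n z y} := by
  have he := h.he
  refine ⟨⟨0, UB_refl he.le _ _⟩, fun z hz => hz, ?_⟩
  rintro z ⟨n, hn⟩
  obtain ⟨s, hs, rfl⟩ := h.surj z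
  refine ⟨s, ⟨hs, fun t ht m hm => ?_⟩, rfl⟩
  have h1 : UB f e (m - L) (φ t) (φ s) := h.agreeUB ht hs _ fun i hi => hm i (by lia)
  exact ⟨min (m - L) n - M, (h.UBc ((h1.mono le_rfl (min_le_left _ n)).trans
    (hn.mono le_rfl (min_le_right (m - L) _))) (by linarith)).mono (by linarith) le_rfl⟩

lemma Setup.contD (h : Setup f S φ e M L) (i : ℤ) : Continuous fun x : Y × Y => D f i x.1 x.2 := by
  have := zpow_cont h.hf h.hf' i
  unfold D
  fun_prop

lemma Setup.tendstoD (h : Setup f S φ e M L) {ι : Type*} {l : Filter ι} {g g' : ι → Y} {p q : Y}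
    (hg : Tendsto g l (𝓝 p)) (hg' : Tendsto g' l (𝓝 q)) (i : ℤ) :
    Tendsto (fun x => D f i (g x) (g' x)) l (𝓝 (D f i p q)) := by
  have := ((h.contD i).tendsto (p, q)).comp (hg.prodMk_nhds hg')
  exact this

lemma Setup.limUB (h : Setup f S φ e M L) {ι : Type*} {l : Filter ι} [l.NeBot] {g g' : ι → Y}
    {p q : Y} (hg : Tendsto g l (𝓝 p)) (hg' : Tendsto g' l (𝓝 q)) {r : ℝ} {n : ℤ}
    (hu : ∀ᶠ x in l, UB f r n (g x) (g' x)) : UB f r n p q := fun i hi =>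
  le_of_tendsto (h.tendstoD hg hg' i) (hu.mono fun _ hx => hx i hi)

lemma Setup.evCB (h : Setup f S φ e M L) {ι : Type*} {l : Filter ι} {g : ι → Y}
    {p : Y} (hg : Tendsto g l (𝓝 p)) {r : ℝ} (hr : 0 < r) (N : ℤ) :
    ∀ᶠ x in l, CB f r N (g x) p := by
  have : ∀ᶠ x in l, ∀ i ∈ Icc (-N) N, D f i (g x) p ≤ r := by
    rw [eventually_all_finite (finite_Icc _ _)]
    intro i _
    have h1 := h.tendstoD hg (tendsto_const_nhds (x := p)) i
    rw [D_self] at h1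
    exact (h1.eventually (gt_mem_nhds hr)).mono fun _ hx => hx.le
  exact this.mono fun x hx i hi hi' => hx i ⟨hi, hi'⟩

lemma Setup.tendstoφ (h : Setup f S φ e M L) {ι : Type*} {l : Filter ι} {g : ι → ℤ → Fin A}
    {s : ℤ → Fin A} (hg : Tendsto g l (𝓝 s)) (hs : s ∈ S) (hgS : ∀ᶠ x in l, g x ∈ S) :
    Tendsto (fun x => φ (g x)) l (𝓝 (φ s)) :=
  (h.hφ s hs).tendsto.comp (tendsto_nhdsWithin_iff.2 ⟨hg, hgS⟩)

lemma evAgree {ι : Type*} {l : Filter ι} {g : ι → ℤ → Fin A} {s : ℤ → Fin A}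
    (hg : Tendsto g l (𝓝 s)) (a b : ℤ) : ∀ᶠ x in l, ∀ i, a ≤ i → i ≤ b → g x i = s i := by
  have : ∀ᶠ x in l, ∀ i ∈ Icc a b, g x i = s i := by
    rw [eventually_all_finite (finite_Icc _ _)]
    intro i _
    have := (tendsto_pi_nhds.1 hg i)
    rw [nhds_discrete, tendsto_pure] at this
    exact this
  exact this.mono fun x hx i hi hj => hx i ⟨hi, hj⟩

/-- Local closedness of `K`. -/
lemma Setup.closed (h : Setup f S φ e M L) {y z : Y} {K : Set Y} (hx : IsPt f S φ e y K)
    {r : ℝ} (hr : r ≤ 10 * e) {n : ℤ}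
    (hz : ∀ δ > 0, ∃ z' ∈ K, UB f r n z' y ∧ dist z z' < δ) : z ∈ K := by
  have he := h.he
  have hz' : ∀ k : ℕ, ∃ z' ∈ K, UB f r n z' y ∧ dist z z' < 1 / ((k : ℝ) + 1) := fun k =>
    hz _ (by positivity)
  choose g hgK hgU hgd using hz'
  have hglim : Tendsto g atTop (𝓝 z) := by
    rw [tendsto_iff_dist_tendsto_zero]
    refine squeeze_zero (fun _ => dist_nonneg) (fun k => ?_) tendsto_one_div_add_atTop_nhds_zero_nat
    rw [dist_comm]; exact (hgd k).le
  choose s hsA hsg using fun k => hx.2.2 (g k) (hgK k)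
  obtain ⟨s0, hs0, θ, hθ, hlim⟩ := h.hS.isCompact.tendsto_subseq (fun k => (hsA k).1)
  have h1 : Tendsto (fun k => φ (s (θ k))) atTop (𝓝 (φ s0)) :=
    h.tendstoφ hlim hs0 (Eventually.of_forall fun k => (hsA (θ k)).1)
  have h2 : Tendsto (fun k => φ (s (θ k))) atTop (𝓝 z) := by
    simp only [hsg]
    exact hglim.comp hθ.tendsto_atTop
  have hz0 : φ s0 = z := tendsto_nhds_unique h1 h2
  have hzU : UB f r n z y := h.limUB h2 (tendsto_const_nhds (x := y))
    (Eventually.of_forall fun k => by rw [hsg]; exact hgU _)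
  obtain ⟨k, hk⟩ := (evAgree hlim (n - L) (n + L)).exists
  obtain ⟨u, huS, hu1, hu2⟩ := h.splice (hsA (θ k)).1 hs0 n hk
  have hu : φ u ∈ K := (hsA (θ k)).2 u huS _ hu1
  have e1 : UB f e n (φ u) (φ (s (θ k))) := h.agreeUB huS (hsA (θ k)).1 n hu1
  have e2 : SB f e n (φ u) (φ s0) := h.agreeSB huS hs0 n (fun i hi => hu2 i hi)
  rw [hsg] at e1
  rw [hz0] at e2
  have e3 := (e1.trans (hgU (θ k))).trans hzU.symm
  have := h.eqOf e3 e2 (by linarith) (by linarith)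
  rwa [← this]

/-- The space of the extension. -/
def Pt (f : Equiv.Perm Y) (S : Set (ℤ → Fin A)) (φ : (ℤ → Fin A) → Y) (e : ℝ) : Type :=
  {p : Y × Set Y // IsPt f S φ e p.1 p.2}

/-- base point -/
def Pt.y (x : Pt f S φ e) : Y := x.1.1

/-- leaf -/
def Pt.K (x : Pt f S φ e) : Set Y := x.1.2

lemma Pt.isPt (x : Pt f S φ e) : IsPt f S φ e x.y x.K := x.2

lemma Pt.ext {x x' : Pt f S φ e} (h1 : x.y = x'.y) (h2 : x.K = x'.K) : x = x' :=
  Subtype.ext (Prod.ext h1 h2)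

lemma Setup.isPt_shift (h : Setup f S φ e M L) (k : ℤ) {y : Y} {K : Set Y}
    (hx : IsPt f S φ e y K) : IsPt f S φ e ((f ^ k) y) {z | (f ^ (-k)) z ∈ K} := by
  obtain ⟨h1, h2, h3⟩ := hx
  have hinv : ∀ z, (f ^ k) ((f ^ (-k)) z) = z := fun z => by
    rw [← Equiv.Perm.mul_apply, ← zpow_add]; simp
  have hinv' : ∀ z, (f ^ (-k)) ((f ^ k) z) = z := fun z => by
    rw [← Equiv.Perm.mul_apply, ← zpow_add]; simp
  refine ⟨?_, ?_, ?_⟩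
  · show (f ^ (-k)) ((f ^ k) y) ∈ K
    rwa [hinv']
  · intro z hz
    obtain ⟨n, hn⟩ := h2 _ hz
    refine ⟨n - k, ?_⟩
    rw [← hinv z, UB_shift, sub_add_cancel]
    exact hn
  · intro z hz
    obtain ⟨s, ⟨hsS, hs⟩, hsz⟩ := h3 _ hz
    refine ⟨fun i => s (i + k), ⟨h.shS s hsS k, fun t ht m hm => ?_⟩, ?_⟩
    · show (f ^ (-k)) (φ t) ∈ K
      rw [← h.shφ t ht]
      refine hs _ (h.shS t ht _) (m + k) fun i hi => ?_
      rw [hm _ (by lia)]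
      ring_nf
    · rw [h.shφ s hsS, hsz, hinv]

/-- iterates of the extension map -/
def Setup.act (h : Setup f S φ e M L) (k : ℤ) (x : Pt f S φ e) : Pt f S φ e :=
  ⟨((f ^ k) x.y, {z | (f ^ (-k)) z ∈ x.K}), h.isPt_shift k x.2⟩

lemma Setup.act_y (h : Setup f S φ e M L) (k : ℤ) (x : Pt f S φ e) :
    (h.act k x).y = (f ^ k) x.y := rfl

lemma Setup.mem_act (h : Setup f S φ e M L) (k : ℤ) (x : Pt f S φ e) (z : Y) :
    z ∈ (h.act k x).K ↔ (f ^ (-k)) z ∈ x.K := Iff.rfl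

lemma Setup.mem_act' (h : Setup f S φ e M L) (k : ℤ) (x : Pt f S φ e) (z : Y) :
    (f ^ k) z ∈ (h.act k x).K ↔ z ∈ x.K := by
  rw [h.mem_act, ← Equiv.Perm.mul_apply, ← zpow_add]; simp

lemma Setup.exists_act (h : Setup f S φ e M L) {k : ℤ} {x : Pt f S φ e} {z : Y}
    (hz : z ∈ (h.act k x).K) : ∃ u ∈ x.K, (f ^ k) u = z := by
  refine ⟨_, hz, ?_⟩
  rw [← Equiv.Perm.mul_apply, ← zpow_add]; simp

lemma Setup.act_act (h : Setup f S φ e M L) (k j : ℤ) (x : Pt f S φ e) :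
    h.act k (h.act j x) = h.act (k + j) x := by
  apply Pt.ext
  · simp only [h.act_y, zpow_add, Equiv.Perm.mul_apply]
  · ext z
    simp only [h.mem_act, neg_add_rev, zpow_add, Equiv.Perm.mul_apply]

lemma Setup.act_zero (h : Setup f S φ e M L) (x : Pt f S φ e) : h.act 0 x = x := by
  apply Pt.ext
  · simp [h.act_y]
  · ext z
    simp [h.mem_act]

/-- The extension map. -/
def Setup.F (h : Setup f S φ e M L) : Equiv.Perm (Pt f S φ e) where
  toFun := h.act 1
  invFun := h.act (-1)
  left_inv x := by rw [h.act_act]; exact h.act_zero x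
  right_inv x := by rw [h.act_act]; exact h.act_zero x

lemma Setup.F_zpow (h : Setup f S φ e M L) (k : ℤ) (x : Pt f S φ e) :
    (h.F ^ k) x = h.act k x := by
  induction k with
  | zero => simp [h.act_zero]
  | succ i ih =>
    rw [add_comm, zpow_add, zpow_one, Equiv.Perm.mul_apply, ih, ← h.act_act]
    rfl
  | pred i ih =>
    rw [sub_eq_add_neg, add_comm, zpow_add, zpow_neg_one, Equiv.Perm.mul_apply, ih, ← h.act_act]
    rfl

/-- half closeness relation -/
def HR (N : ℤ) (x x' : Pt f S φ e) : Prop :=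
  ∀ z ∈ x.K, UB f e (-N) z x.y → ∃ v ∈ x'.K, UB f (3 * e) (-N) v x'.y ∧ CB f e N z v

/-- closeness relation -/
def VR (N : ℤ) (x x' : Pt f S φ e) : Prop := CB f e N x.y x'.y ∧ HR N x x' ∧ HR N x' x

lemma VR.symm {N : ℤ} {x x' : Pt f S φ e} (hv : VR N x x') : VR N x' x :=
  ⟨hv.1.symm, hv.2.2, hv.2.1⟩

lemma VR.up {N : ℤ} {x x' : Pt f S φ e} (hv : VR N x x') {n : ℤ} (hn : -N ≤ n)
    (hn' : n ≤ N) {z : Y} (hz : z ∈ x.K) (hzU : UB f e n z x.y) :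
    ∃ z' ∈ x'.K, UB f (3 * e) n z' x'.y ∧ CB f e N z z' := by
  obtain ⟨z', hz', hU, hC⟩ := hv.2.1 z hz (hzU.mono le_rfl hn)
  refine ⟨z', hz', fun i hi => ?_, hC⟩
  rcases le_total i (-N) with h1 | h1
  · exact hU i h1
  · have a1 := hC i h1 (by lia)
    have a2 := hv.1 i h1 (by lia)
    have a3 := hzU i hi
    have t1 := D_tri (f := f) i z' z x'.y
    have t2 := D_tri (f := f) i z x.y x'.y
    rw [D_comm i z' z] at t1
    linarith

lemma VR.mono {N N' : ℤ} (hN : N' ≤ N) (hN0 : 0 ≤ N') {x x' : Pt f S φ e} (hv : VR N x x') :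
    VR N' x x' := by
  refine ⟨hv.1.mono le_rfl hN, fun z hz hU => ?_, fun z hz hU => ?_⟩
  · obtain ⟨z', h1, h2, h3⟩ := hv.up (n := -N') (by lia) (by lia) hz hU
    exact ⟨z', h1, h2, h3.mono le_rfl hN⟩
  · obtain ⟨z', h1, h2, h3⟩ := hv.symm.up (n := -N') (by lia) (by lia) hz hU
    exact ⟨z', h1, h2, h3.mono le_rfl hN⟩

lemma Setup.VR_refl (h : Setup f S φ e M L) (N : ℤ) (x : Pt f S φ e) : VR N x x := by
  have he := h.he
  have : HR N x x := fun z hz hU => ⟨z, hz, hU.mono (by linarith) le_rfl, CB_refl he.le _ _⟩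
  exact ⟨CB_refl he.le _ _, this, this⟩

lemma Setup.HR_comp (h : Setup f S φ e M L) {N N' : ℤ} (hN0 : 0 ≤ N) (hN : N + 2 * M ≤ N')
    {x x' x'' : Pt f S φ e} (hv : VR N' x x') (hv' : VR N' x' x'') : HR N x x'' := by
  intro z hz hU
  have he := h.he
  obtain ⟨z', hz', hU', hC'⟩ := hv.up (n := -N) (by lia) (by lia) hz hU
  have hU1 := (h.UBc hU' (by linarith)).mono (show e / 4 ≤ e by linarith) le_rfl
  obtain ⟨z'', hz'', hU'', hC''⟩ := hv'.up (n := -N - M) (by lia) (by lia) hz' hU1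
  have c1 : CB f (e / 4) (N + M) z z' := h.CBc hC' (by linarith) (by lia)
  have c2 : CB f (e / 4) (N + M) z' z'' := h.CBc hC'' (by linarith) (by lia)
  have c3 : CB f (e / 4) (N + M) x.y x'.y := h.CBc hv.1 (by linarith) (by lia)
  have c4 : CB f (e / 4) (N + M) x'.y x''.y := h.CBc hv'.1 (by linarith) (by lia)
  refine ⟨z'', hz'', fun i hi => ?_, fun i hi hi' => ?_⟩
  · rcases le_total i (-N - M) with h1 | h1
    · exact hU'' i h1
    · have a1 := c1 i (by lia) (by lia)
      have a2 := c2 i (by lia) (by lia)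
      have a3 := c3 i (by lia) (by lia)
      have a4 := c4 i (by lia) (by lia)
      have a5 := hU i hi
      have t1 := D_tri (f := f) i z'' z' x''.y
      have t2 := D_tri (f := f) i z' z x''.y
      have t3 := D_tri (f := f) i z x.y x''.y
      have t4 := D_tri (f := f) i x.y x'.y x''.y
      rw [D_comm i z'' z'] at t1
      rw [D_comm i z' z] at t2
      linarith
  · have a1 := c1 i (by lia) (by lia)
    have a2 := c2 i (by lia) (by lia)
    have t1 := D_tri (f := f) i z z' z''
    linarith

lemma Setup.VR_comp (h : Setup f S φ e M L) {N N' : ℤ} (hN0 : 0 ≤ N) (hN : N + 2 * M ≤ N')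
    {x x' x'' : Pt f S φ e} (hv : VR N' x x') (hv' : VR N' x' x'') : VR N x x'' := by
  have he := h.he
  refine ⟨fun i hi hi' => ?_, h.HR_comp hN0 hN hv hv', h.HR_comp hN0 hN hv'.symm hv.symm⟩
  have a1 := h.CBc (n' := N) hv.1 (by linarith) (by lia) i hi hi'
  have a2 := h.CBc (n' := N) hv'.1 (by linarith) (by lia) i hi hi'
  have t1 := D_tri (f := f) i x.y x'.y x''.y
  linarith

/-- The uniform structure. -/
@[reducible] noncomputable def Setup.uniform (h : Setup f S φ e M L) : UniformSpace (Pt f S φ e) :=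
  UniformSpace.ofCore (UniformSpace.Core.mkOfBasis
    { sets := Set.range fun N : ℕ => {p : Pt f S φ e × Pt f S φ e | VR (N : ℤ) p.1 p.2}
      nonempty := ⟨_, 0, rfl⟩
      inter_sets := by
        rintro _ _ ⟨N, rfl⟩ ⟨N', rfl⟩
        refine ⟨_, ⟨max N N', rfl⟩, fun p hp => ⟨?_, ?_⟩⟩
        · exact VR.mono (by simp) (by simp) hp
        · exact VR.mono (by simp) (by simp) hp }
    (by rintro _ ⟨N, rfl⟩ x; exact h.VR_refl _ x)
    (by rintro _ ⟨N, rfl⟩; exact ⟨_, ⟨N, rfl⟩, fun p hp => VR.symm hp⟩)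
    (by
      rintro _ ⟨N, rfl⟩
      refine ⟨_, ⟨N + 2 * M, rfl⟩, ?_⟩
      rintro ⟨a, b⟩ ⟨c, h1, h2⟩
      exact h.VR_comp (by simp) (by push_cast; rfl) h1 h2))

lemma Setup.basis (h : Setup f S φ e M L) :
    letI := h.uniform
    (uniformity (Pt f S φ e)).HasBasis (fun _ : ℕ => True)
      (fun N => {p | VR (N : ℤ) p.1 p.2}) := by
  letI := h.uniform
  constructor
  intro t
  constructor
  · intro ht
    obtain ⟨s, ⟨N, rfl⟩, hs⟩ := ht
    exact ⟨N, trivial, hs⟩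
  · rintro ⟨N, -, hN⟩
    exact ⟨_, ⟨N, rfl⟩, hN⟩

lemma VR_zero_D {N : ℤ} (hN : 0 ≤ N) {x x' : Pt f S φ e} (hv : VR N x x') : dist x.y x'.y ≤ e := by
  have := hv.1 0 (by lia) (by lia)
  rwa [D_zero] at this

lemma Setup.eq_of_CB (h : Setup f S φ e M L) {p q : Y} (hc : ∀ N : ℕ, CB f e N p q) : p = q := by
  have he := h.he
  apply h.exp
  intro i
  have := hc i.natAbs i (by lia) (by lia)
  linarith

lemma Setup.sub_of_VR (h : Setup f S φ e M L) {x x' : Pt f S φ e} (hv : ∀ N : ℕ, VR N x x') :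
    x.K ⊆ x'.K := by
  have he := h.he
  intro z hz
  obtain ⟨n, hn⟩ := x.isPt.2.1 z hz
  refine h.closed x'.isPt (r := 3 * e) (n := n) (by linarith) fun δ hδ => ?_
  obtain ⟨N, hN⟩ := h.uexp δ hδ
  obtain ⟨z', h1, h2, h3⟩ := (hv (N + n.natAbs)).up (n := n) (by lia)
    (by lia) hz hn
  exact ⟨z', h1, h2, hN _ _ (h3.mono (by linarith) (by lia))⟩

lemma Setup.t0 (h : Setup f S φ e M L) :
    letI := h.uniform
    T0Space (Pt f S φ e) := by
  letI := h.uniform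
  rw [t0Space_iff_uniformity]
  intro x x' hx
  have hv : ∀ N : ℕ, VR N x x' := fun N => hx _ (h.basis.mem_of_mem (i := N) trivial)
  exact Pt.ext (h.eq_of_CB fun N => (hv N).1)
    ((h.sub_of_VR hv).antisymm (h.sub_of_VR fun N => (hv N).symm))

lemma Setup.VR_fwd (h : Setup f S φ e M L) {N : ℤ} (hN : 0 ≤ N) {x x' : Pt f S φ e}
    (hv : VR (N + 1) x x') : VR N (h.act 1 x) (h.act 1 x') := by
  have key : ∀ {x x' : Pt f S φ e}, VR (N + 1) x x' → HR N (h.act 1 x) (h.act 1 x') := by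
    intro x x' hv z hz hU
    obtain ⟨u, hu, rfl⟩ := h.exists_act hz
    rw [h.act_y, UB_shift] at hU
    obtain ⟨u', h1, h2, h3⟩ := hv.up (n := -N + 1) (by lia) (by lia) hu hU
    refine ⟨(f ^ (1 : ℤ)) u', (h.mem_act' _ _ _).2 h1, ?_, ?_⟩
    · rw [h.act_y, UB_shift]; exact h2
    · intro i hi hi'
      rw [D_shift]; exact h3 _ (by lia) (by lia)
  refine ⟨fun i hi hi' => ?_, key hv, key hv.symm⟩
  rw [h.act_y, h.act_y, D_shift]
  exact hv.1 _ (by lia) (by lia)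

lemma Setup.VR_bwd (h : Setup f S φ e M L) {N : ℤ} {x x' : Pt f S φ e}
    (hv : VR (N + 1) x x') : VR N (h.act (-1) x) (h.act (-1) x') := by
  have key : ∀ {x x' : Pt f S φ e}, VR (N + 1) x x' → HR N (h.act (-1) x) (h.act (-1) x') := by
    intro x x' hv z hz hU
    obtain ⟨u, hu, rfl⟩ := h.exists_act hz
    rw [h.act_y, UB_shift] at hU
    obtain ⟨u', h1, h2, h3⟩ := hv.2.1 u hu (hU.mono le_rfl (by lia))
    refine ⟨(f ^ (-1 : ℤ)) u', (h.mem_act' _ _ _).2 h1, ?_, ?_⟩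
    · rw [h.act_y, UB_shift]; exact h2.mono le_rfl (by lia)
    · intro i hi hi'
      rw [D_shift]; exact h3 _ (by lia) (by lia)
  refine ⟨fun i hi hi' => ?_, key hv, key hv.symm⟩
  rw [h.act_y, h.act_y, D_shift]
  exact hv.1 _ (by lia) (by lia)

lemma Setup.VR_bwd' (h : Setup f S φ e M L) {N : ℤ} (k : ℕ) {x x' : Pt f S φ e}
    (hv : VR (N + k) x x') : VR N (h.act (-k) x) (h.act (-k) x') := by
  induction k generalizing N with
  | zero => simpa [h.act_zero] using hv
  | succ k ih =>
    have h1 := ih (N := N + 1) (by convert hv using 1; push_cast; ring)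
    have h2 := h.VR_bwd h1
    rw [h.act_act, h.act_act] at h2
    convert h2 using 2 <;> push_cast <;> ring

/-- Convergence of an ultrafilter. -/
def Conv (U : Ultrafilter (Pt f S φ e)) (x0 : Pt f S φ e) : Prop :=
  ∀ N : ℕ, ∀ᶠ x in U, VR N x0 x

/-- The limit leaf. -/
def LK (U : Ultrafilter (Pt f S φ e)) (z : Y) : Prop :=
  ∃ n : ℤ, ∃ g : Pt f S φ e → Y, (∀ᶠ x in U, g x ∈ x.K ∧ UB f e n (g x) x.y) ∧
    Tendsto g U (𝓝 z)

lemma ulim [CompactSpace Y] {ι : Type*} (U : Ultrafilter ι) (g : ι → Y) :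
    ∃ z, Tendsto g U (𝓝 z) :=
  ⟨_, (U.map g).le_nhds_lim⟩

lemma Setup.ulimS (h : Setup f S φ e M L) {ι : Type*} (U : Ultrafilter ι) (g : ι → ℤ → Fin A)
    (hg : ∀ᶠ x in U, g x ∈ S) : ∃ s ∈ S, Tendsto g U (𝓝 s) := by
  obtain ⟨s, hs, hl⟩ := h.hS.isCompact.ultrafilter_le_nhds' (U.map g) hg
  exact ⟨s, hs, hl⟩

lemma Setup.limAdm (h : Setup f S φ e M L) {U : Ultrafilter (Pt f S φ e)} {r : ℝ} {n : ℤ}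
    {σ : Pt f S φ e → ℤ → Fin A} {s : ℤ → Fin A} (hr : r ≤ 49 * e)
    (hU : ∀ᶠ x in U, UB f r n (φ (σ x)) x.y) (hA : ∀ᶠ x in U, Adm S φ x.K (σ x))
    (hlim : Tendsto σ U (𝓝 s)) {t : ℤ → Fin A} (ht : t ∈ S) (m : ℤ)
    (hm : ∀ i ≤ m, t i = s i) : LK U (φ t) := by
  have he := h.he
  have hag := evAgree hlim (m - L - L) (m - L + L)
  have hτ : ∀ x, ∃ τ : ℤ → Fin A, (Adm S φ x.K (σ x) → (∀ i, m - L - L ≤ i → i ≤ m - L + L →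
      σ x i = s i) → τ ∈ S ∧ (∀ i ≤ m, τ i = σ x i) ∧ ∀ i ≥ m - L - L, τ i = t i) := by
    intro x
    by_cases hx : Adm S φ x.K (σ x) ∧ (∀ i, m - L - L ≤ i → i ≤ m - L + L → σ x i = s i)
    · obtain ⟨u, h1, h2, h3⟩ := h.splice hx.1.1 ht (m - L) fun i hi hi' => by
        rw [hx.2 i hi hi', hm i (by lia)]
      exact ⟨u, fun _ _ => ⟨h1, fun i hi => h2 i (by lia), h3⟩⟩
    · exact ⟨s, fun a b => absurd ⟨a, b⟩ hx⟩
  choose τ hτ using hτ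
  have hτl : Tendsto τ U (𝓝 t) := by
    rw [tendsto_pi_nhds]
    intro i
    rw [nhds_discrete, tendsto_pure]
    filter_upwards [hA, hag, evAgree hlim i i] with x h1 h2 h3
    obtain ⟨-, h4, h5⟩ := hτ x h1 h2
    rcases le_total i m with hi | hi
    · rw [h4 i hi, h3 i le_rfl le_rfl, hm i hi]
    · exact h5 i (by lia)
  refine ⟨min (m - L) n - M, fun x => φ (τ x), ?_, h.tendstoφ hτl ht ?_⟩
  · filter_upwards [hA, hag, hU] with x h1 h2 h3
    obtain ⟨h6, h4, h5⟩ := hτ x h1 h2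
    refine ⟨h1.2 _ h6 m h4, ?_⟩
    have a1 : UB f e (m - L) (φ (τ x)) (φ (σ x)) := h.agreeUB h6 h1.1 _ fun i hi => h4 i (by lia)
    exact (h.UBc ((a1.mono le_rfl (min_le_left _ n)).trans
      (h3.mono le_rfl (min_le_right (m - L) n))) (by linarith)).mono (by linarith) le_rfl
  · filter_upwards [hA, hag] with x h1 h2
    exact (hτ x h1 h2).1

lemma Setup.LK_mem (h : Setup f S φ e M L) {U : Ultrafilter (Pt f S φ e)} {x0 : Pt f S φ e}
    (hc : Conv U x0) {z : Y} (hz : LK U z) : z ∈ x0.K := by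
  have he := h.he
  obtain ⟨n, g, hg, hl⟩ := hz
  refine h.closed x0.isPt (r := 3 * e) (n := n) (by linarith) fun δ hδ => ?_
  obtain ⟨N, hN⟩ := h.uexp (δ / 2) (by positivity)
  obtain ⟨x, ⟨h1, h2⟩, h3, h4⟩ := (hg.and ((hc (N + n.natAbs)).and
    (Metric.tendsto_nhds.1 hl (δ / 2) (by positivity)))).exists
  obtain ⟨z', a1, a2, a3⟩ := h3.symm.up (n := n) (by lia) (by lia) h1 h2
  refine ⟨z', a1, a2, ?_⟩
  have := hN _ _ (a3.mono (by linarith) (by lia))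
  have t := dist_triangle z (g x) z'
  rw [dist_comm z (g x)] at t
  linarith

/-- choice of admissible sequences along an ultrafilter -/
lemma Setup.chooseAdm (h : Setup f S φ e M L) {U : Ultrafilter (Pt f S φ e)} {g : Pt f S φ e → Y}
    {z : Y} (hg : ∀ᶠ x in U, g x ∈ x.K) (hl : Tendsto g U (𝓝 z)) :
    ∃ (σ : Pt f S φ e → ℤ → Fin A) (s : ℤ → Fin A), s ∈ S ∧ φ s = z ∧ Tendsto σ U (𝓝 s) ∧
      ∀ᶠ x in U, Adm S φ x.K (σ x) ∧ φ (σ x) = g x := by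
  have hσ : ∀ x : Pt f S φ e, ∃ σ : ℤ → Fin A, g x ∈ x.K → Adm S φ x.K σ ∧ φ σ = g x := by
    intro x
    by_cases hx : g x ∈ x.K
    · obtain ⟨s, hs⟩ := x.isPt.2.2 _ hx
      exact ⟨s, fun _ => hs⟩
    · obtain ⟨s, hs⟩ := h.surj z
      exact ⟨s, fun a => absurd a hx⟩
  choose σ hσ using hσ
  have hA : ∀ᶠ x in U, Adm S φ x.K (σ x) ∧ φ (σ x) = g x := hg.mono fun x hx => hσ x hx
  obtain ⟨s, hs, hls⟩ := h.ulimS U σ (hA.mono fun x hx => hx.1.1)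
  refine ⟨σ, s, hs, ?_, hls, hA⟩
  have h1 := h.tendstoφ hls hs (hA.mono fun x hx => hx.1.1)
  have h2 := hl.congr' (hA.mono fun x hx => hx.2.symm)
  exact tendsto_nhds_unique h1 h2

lemma Setup.exists_conv [CompactSpace Y] (h : Setup f S φ e M L)
    (U : Ultrafilter (Pt f S φ e)) : ∃ x0, Conv U x0 := by
  have he := h.he
  obtain ⟨y, hy⟩ := ulim U (Pt.y (f := f) (S := S) (φ := φ) (e := e))
  have hpt : IsPt f S φ e y {z | LK U z} := by
    refine ⟨⟨0, Pt.y, Eventually.of_forall fun x => ⟨x.isPt.1, UB_refl he.le _ _⟩, hy⟩, ?_, ?_⟩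
    · rintro z ⟨n, g, hg, hl⟩
      exact ⟨n, h.limUB hl hy (hg.mono fun x hx => hx.2)⟩
    · rintro z ⟨n, g, hg, hl⟩
      obtain ⟨σ, s, hs, hsz, hls, hA⟩ := h.chooseAdm (hg.mono fun x hx => hx.1) hl
      refine ⟨s, ⟨hs, fun t ht m hm => ?_⟩, hsz⟩
      refine h.limAdm (r := e) (n := n) (by linarith) ?_ (hA.mono fun x hx => hx.1) hls ht m hm
      filter_upwards [hg, hA] with x h1 h2
      rw [h2.2]; exact h1.2
  refine ⟨⟨(y, {z | LK U z}), hpt⟩, fun N => ?_⟩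
  have hN1 : ∀ᶠ x : Pt f S φ e in U, CB f e N y (Pt.y x) :=
    (h.evCB hy he N).mono fun x hx => hx.symm
  refine hN1.and (Eventually.and ?_ ?_)
  · by_contra hcon
    rw [← Ultrafilter.eventually_not] at hcon
    have hbad : ∀ x : Pt f S φ e, ∃ z, ¬ HR (N : ℤ) (⟨(y, {z | LK U z}), hpt⟩ : Pt f S φ e) x →
        LK U z ∧ UB f e (-N) z y ∧ ∀ z' ∈ x.K, UB f (3 * e) (-N) z' x.y → ¬ CB f e N z z' := by
      intro x
      by_cases hx : HR (N : ℤ) (⟨(y, {z | LK U z}), hpt⟩ : Pt f S φ e) x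
      · exact ⟨y, fun a => absurd hx a⟩
      · have hx' := hx
        unfold HR at hx'
        push Not at hx'
        obtain ⟨z, h1, h2, h3⟩ := hx'
        exact ⟨z, fun _ => ⟨h1, h2, h3⟩⟩
    choose b hb using hbad
    obtain ⟨z, hz⟩ := ulim U b
    have hzK : LK U z := by
      refine h.closed hpt (r := e) (n := -N) (by linarith) fun δ hδ => ?_
      obtain ⟨x, h1, h2⟩ := (hcon.and (Metric.tendsto_nhds.1 hz δ hδ)).exists
      exact ⟨b x, (hb x h1).1, (hb x h1).2.1, by rwa [dist_comm]⟩
    have hzU : UB f e (-N) z y := h.limUB hz (tendsto_const_nhds (x := y))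
      (hcon.mono fun x hx => (hb x hx).2.1)
    obtain ⟨n, g, hg, hl⟩ := hzK
    have he4 : 0 < e / 4 := by positivity
    obtain ⟨x, h1, h2, h3, h4, h5⟩ := (hcon.and (hg.and ((h.evCB hz he4 N).and
      ((h.evCB hl he4 (N + n.natAbs)).and (h.evCB hy he4 (N + n.natAbs)))))).exists
    refine (hb x h1).2.2 (g x) h2.1 (fun i hi => ?_) (fun i hi hi' => ?_)
    · rcases le_total i n with hin | hin
      · linarith [h2.2 i hin]
      · have a1 := h4 i (by lia) (by lia)
        have a2 := h5 i (by lia) (by lia)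
        have a3 := hzU i hi
        have t1 := D_tri (f := f) i (g x) z x.y
        have t2 := D_tri (f := f) i z y x.y
        rw [D_comm i x.y y] at a2
        linarith
    · have a1 := h4 i (by lia) (by lia)
      have a2 := h3 i (by lia) (by lia)
      have t1 := D_tri (f := f) i (b x) z (g x)
      rw [D_comm i (g x) z] at a1
      linarith
  · by_contra hcon
    rw [← Ultrafilter.eventually_not] at hcon
    have hbad : ∀ x : Pt f S φ e, ∃ z, ¬ HR (N : ℤ) x (⟨(y, {z | LK U z}), hpt⟩ : Pt f S φ e) →
        z ∈ x.K ∧ UB f e (-N) z x.y ∧ ∀ z', LK U z' → UB f (3 * e) (-N) z' y → ¬ CB f e N z z' := by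
      intro x
      by_cases hx : HR (N : ℤ) x (⟨(y, {z | LK U z}), hpt⟩ : Pt f S φ e)
      · exact ⟨y, fun a => absurd hx a⟩
      · have hx' := hx
        unfold HR at hx'
        push Not at hx'
        obtain ⟨z, h1, h2, h3⟩ := hx'
        exact ⟨z, fun _ => ⟨h1, h2, h3⟩⟩
    choose b hb using hbad
    obtain ⟨z, hz⟩ := ulim U b
    have hzK : LK U z := ⟨-N, b, hcon.mono fun x hx => ⟨(hb x hx).1, (hb x hx).2.1⟩, hz⟩
    have hzU : UB f e (-N) z y := h.limUB hz hy (hcon.mono fun x hx => (hb x hx).2.1)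
    obtain ⟨x, h1, h2⟩ := (hcon.and (h.evCB hz he N)).exists
    exact (hb x h1).2.2 z hzK (hzU.mono (by linarith) le_rfl) h2

lemma Setup.conv_of_le (h : Setup f S φ e M L) {U : Ultrafilter (Pt f S φ e)} {x0 : Pt f S φ e} :
    letI := h.uniform
    (U : Filter (Pt f S φ e)) ≤ 𝓝 x0 ↔ Conv U x0 := by
  letI := h.uniform
  have hb := nhds_basis_uniformity' h.basis (x := x0)
  rw [hb.ge_iff]
  exact ⟨fun a N => a N trivial, fun a N _ => a N⟩

lemma Setup.compact [CompactSpace Y] (h : Setup f S φ e M L) :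
    letI := h.uniform
    CompactSpace (Pt f S φ e) := by
  letI := h.uniform
  refine ⟨isCompact_iff_ultrafilter_le_nhds.2 fun U _ => ?_⟩
  obtain ⟨x0, hx⟩ := h.exists_conv U
  exact ⟨x0, mem_univ _, h.conv_of_le.2 hx⟩

lemma Setup.holA1 [CompactSpace Y] (h : Setup f S φ e M L) {U : Ultrafilter (Pt f S φ e)}
    {x0 : Pt f S φ e} (hc : Conv U x0) : ∀ᶠ x : Pt f S φ e in U, ∀ z ∈ x.K, UB f (2 * e) 0 z x.y →
      ∃ z0 ∈ x0.K, SB f e 0 z z0 ∧ UB f (3 * e) 0 z0 x0.y := by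
  have he := h.he
  by_contra hcon
  rw [← Ultrafilter.eventually_not] at hcon
  have hbad : ∀ x : Pt f S φ e, ∃ z, (¬ ∀ z ∈ x.K, UB f (2 * e) 0 z x.y →
      ∃ z0 ∈ x0.K, SB f e 0 z z0 ∧ UB f (3 * e) 0 z0 x0.y) → z ∈ x.K ∧ UB f (2 * e) 0 z x.y ∧
      ∀ z0 ∈ x0.K, SB f e 0 z z0 → ¬ UB f (3 * e) 0 z0 x0.y := by
    intro x
    by_cases hx : ∀ z ∈ x.K, UB f (2 * e) 0 z x.y →
      ∃ z0 ∈ x0.K, SB f e 0 z z0 ∧ UB f (3 * e) 0 z0 x0.y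
    · exact ⟨x0.y, fun a => absurd hx a⟩
    · have hx' := hx
      push Not at hx'
      obtain ⟨z, hz⟩ := hx'
      exact ⟨z, fun _ => hz⟩
  choose b hb using hbad
  obtain ⟨z, hz⟩ := ulim U b
  obtain ⟨σ, s, hs, hsz, hls, hA⟩ := h.chooseAdm (hcon.mono fun x hx => (hb x hx).1) hz
  have hy : Tendsto (fun x : Pt f S φ e => x.y) U (𝓝 x0.y) := by
    rw [Metric.tendsto_nhds]
    intro δ hδ
    obtain ⟨N, hN⟩ := h.uexp δ hδ
    exact (hc N).mono fun x hx => hN _ _ (hx.1.symm.mono (by linarith) le_rfl)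
  have hzU : UB f (2 * e) 0 z x0.y := h.limUB hz hy (hcon.mono fun x hx => (hb x hx).2.1)
  obtain ⟨x, h1, h2, h3⟩ := (hcon.and (hA.and (evAgree hls (0 - L) (0 + L)))).exists
  obtain ⟨u, huS, hu1, hu2⟩ := h.splice hs h2.1.1 0 (fun i hi hi' => (h3 i hi hi').symm)
  have huK : φ u ∈ x0.K := by
    refine h.LK_mem hc (h.limAdm (r := 2 * e) (n := 0) (by linarith) ?_ (hA.mono fun x hx => hx.1)
      hls huS _ hu1)
    filter_upwards [hcon, hA] with x h1 h2
    rw [h2.2]; exact (hb x h1).2.1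
  have a1 : UB f e 0 (φ u) (φ s) := h.agreeUB huS hs 0 hu1
  have a2 : SB f e 0 (φ u) (φ (σ x)) := h.agreeSB huS h2.1.1 0 hu2
  rw [hsz] at a1
  rw [h2.2] at a2
  exact (hb x h1).2.2 _ huK a2.symm ((a1.trans hzU).mono (by linarith) le_rfl)

lemma Setup.holA2 (h : Setup f S φ e M L) {U : Ultrafilter (Pt f S φ e)}
    {x0 : Pt f S φ e} (hc : Conv U x0) : ∀ᶠ x : Pt f S φ e in U, ∀ z ∈ x0.K, UB f (3 * e) 0 z x0.y →
      ∃ z' ∈ x.K, SB f e 0 z z' ∧ UB f (6 * e) 0 z' x.y := by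
  have he := h.he
  let W := (Icc (-(L : ℤ)) L : Set ℤ) → Fin A
  let P : W → Pt f S φ e → Prop := fun w x => ∃ s, Adm S φ x.K s ∧ (∀ i, s i.1 = w i) ∧
    UB f (5 * e) 0 (φ s) x.y
  let E : Set W := {w | ∀ᶠ x in U, P w x}
  have hE1 : ∀ᶠ x in U, ∀ w : W, w ∈ E → P w x := by
    rw [eventually_all]
    intro w
    by_cases hw : w ∈ E
    · exact Eventually.mono hw fun x hx _ => hx
    · exact Eventually.of_forall fun x a => absurd a hw
  have hE2 : ∀ᶠ x in U, ∀ w : W, P w x → w ∈ E := by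
    rw [eventually_all]
    intro w
    by_cases hw : w ∈ E
    · exact Eventually.of_forall fun x _ => hw
    · have hw' : ∀ᶠ x in U, ¬ P w x := by
        rwa [Ultrafilter.eventually_not]
      exact hw'.mono fun x hx a => absurd a hx
  have key : ∀ z ∈ x0.K, UB f (3 * e) 0 z x0.y → ∃ s ∈ S, φ s = z ∧
      (fun i : (Icc (-(L : ℤ)) L : Set ℤ) => s i.1) ∈ E := by
    intro z hz hzU
    have hzU1 : UB f e (0 - M) z x0.y := (h.UBc hzU (by linarith)).mono (by linarith) le_rfl
    have hN : ∀ N : ℕ, ∃ s ∈ S, (fun i : (Icc (-(L : ℤ)) L : Set ℤ) => s i.1) ∈ E ∧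
        CB f e N z (φ s) := by
      intro N
      obtain ⟨x, h1, h2⟩ := ((hc (N + M)).and hE2).exists
      obtain ⟨z', a1, a2, a3⟩ := h1.up (n := 0 - M) (by lia) (by lia) hz hzU1
      obtain ⟨s, hsA, rfl⟩ := x.isPt.2.2 _ a1
      refine ⟨s, hsA.1, h2 _ ⟨s, hsA, fun i => rfl, fun i hi => ?_⟩, a3.mono le_rfl (by lia)⟩
      rcases le_total i (0 - M) with hi' | hi'
      · linarith [a2 i hi']
      · have b1 := a3 i (by lia) (by lia)
        have b2 := h1.1 i (by lia) (by lia)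
        have b3 := hzU i hi
        have t1 := D_tri (f := f) i (φ s) z x.y
        have t2 := D_tri (f := f) i z x0.y x.y
        rw [D_comm i z (φ s)] at b1
        linarith
    choose s hsS hsE hsC using hN
    obtain ⟨s0, hs0, θ, hθ, hlim⟩ := h.hS.isCompact.tendsto_subseq hsS
    refine ⟨s0, hs0, ?_, ?_⟩
    · symm
      apply h.exp
      intro i
      have h1 := h.tendstoφ hlim hs0 (Eventually.of_forall fun k => hsS (θ k))
      have h2 := h.tendstoD (tendsto_const_nhds (x := z)) h1 i
      have h3 : D f i z (φ s0) ≤ e := by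
        refine le_of_tendsto h2 ?_
        filter_upwards [eventually_ge_atTop i.natAbs] with k hk
        have := hθ.id_le k
        simp only [id] at this
        exact hsC (θ k) i (by lia) (by lia)
      linarith
    · obtain ⟨k, hk⟩ := (evAgree hlim (-L) L).exists
      convert hsE (θ k) using 2 with i
      exact (hk i.1 i.2.1 i.2.2).symm
  filter_upwards [hE1] with x hx z hz hzU
  obtain ⟨s, hs, rfl, hsE⟩ := key z hz hzU
  obtain ⟨s', hA', hw, hU'⟩ := hx _ hsE
  obtain ⟨u, huS, hu1, hu2⟩ := h.splice hA'.1 hs 0 (fun i hi hi' =>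
    hw ⟨i, ⟨by lia, by lia⟩⟩)
  have a1 : UB f e 0 (φ u) (φ s') := h.agreeUB huS hA'.1 0 hu1
  have a2 : SB f e 0 (φ u) (φ s) := h.agreeSB huS hs 0 hu2
  exact ⟨φ u, hA'.2 u huS _ hu1, a2.symm, (a1.trans hU').mono (by linarith) le_rfl⟩

/-- holonomy -/
def Hol (n : ℤ) (x x' : Pt f S φ e) : Prop := ∀ z ∈ x.K, UB f (2 * e) n z x.y →
  ∃ z' ∈ x'.K, SB f (2 * e) n z z' ∧ UB f (10 * e) n z' x'.y

lemma Setup.exists_hol [CompactSpace Y] (h : Setup f S φ e M L) :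
    ∃ N : ℕ, ∀ x x' : Pt f S φ e, VR N x x' → Hol 0 x x' := by
  have he := h.he
  letI := h.uniform
  haveI := h.compact
  have hmem : {p : Pt f S φ e × Pt f S φ e | Hol 0 p.1 p.2} ∈ uniformity (Pt f S φ e) := by
    rw [compactSpace_uniformity]
    simp only [Filter.mem_iSup]
    intro x0
    have h1 : ∀ᶠ x in 𝓝 x0, ∀ z ∈ x.K, UB f (2 * e) 0 z x.y →
        ∃ z0 ∈ x0.K, SB f e 0 z z0 ∧ UB f (3 * e) 0 z0 x0.y :=
      mem_iff_ultrafilter.2 fun U hU => h.holA1 (h.conv_of_le.1 hU)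
    have h2 : ∀ᶠ x in 𝓝 x0, ∀ z ∈ x0.K, UB f (3 * e) 0 z x0.y →
        ∃ z' ∈ x.K, SB f e 0 z z' ∧ UB f (6 * e) 0 z' x.y :=
      mem_iff_ultrafilter.2 fun U hU => h.holA2 (h.conv_of_le.1 hU)
    rw [nhds_prod_eq]
    filter_upwards [prod_mem_prod h1 h2]
    rintro ⟨x, x'⟩ ⟨a1, a2⟩ z hz hzU
    obtain ⟨z0, b1, b2, b3⟩ := a1 z hz hzU
    obtain ⟨z', c1, c2, c3⟩ := a2 z0 b1 b3
    refine ⟨z', c1, ?_, c3.mono (by linarith) le_rfl⟩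
    intro i hi
    linarith [(b2.trans c2) i hi]
  obtain ⟨N, -, hN⟩ := h.basis.mem_iff.1 hmem
  exact ⟨N, fun x x' hv => hN (show (x, x') ∈ _ from hv)⟩

lemma Setup.hol_act (h : Setup f S φ e M L) {n : ℤ} {x x' : Pt f S φ e}
    (hh : Hol 0 (h.act n x) (h.act n x')) : Hol n x x' := by
  intro z hz hzU
  obtain ⟨z', h1, h2, h3⟩ := hh ((f ^ n) z) ((h.mem_act' _ _ _).2 hz) (by
    rw [h.act_y, UB_shift, zero_add]; exact hzU)
  obtain ⟨u, hu, rfl⟩ := h.exists_act h1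
  rw [SB_shift, zero_add] at h2
  rw [h.act_y, UB_shift, zero_add] at h3
  exact ⟨u, hu, h2, h3⟩

lemma Setup.Deq (h : Setup f S φ e M L) {x x' : Pt f S φ e} (hy : x.y = x'.y)
    (hh : ∀ n0 : ℤ, ∃ n ≤ n0, Hol n x x') : x.K ⊆ x'.K := by
  have he := h.he
  intro z hz
  obtain ⟨n0, hn0⟩ := x.isPt.2.1 z hz
  obtain ⟨n, hn, hh⟩ := hh n0
  have hzU := hn0.mono (show e ≤ 2 * e by linarith) hn
  obtain ⟨z', h1, h2, h3⟩ := hh z hz hzU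
  have h4 := hzU
  rw [hy] at h4
  rwa [h.eqOf (h4.trans h3.symm) h2 (by linarith) (by linarith)]

lemma Setup.lemT_half (h : Setup f S φ e M L) {B M' : ℤ} (hM' : B + 2 * M ≤ M')
    {x w : Pt f S φ e} (hs : SB f (20 * e) (-M') x.y w.y)
    (hC : ∀ u ∈ x.K, UB f e (-M') u x.y → ∃ u' ∈ w.K, SB f (2 * e) (-M') u u' ∧
      UB f (20 * e) (-M') u' w.y) {n : ℤ} (hn : 0 ≤ n) : HR B (h.act n x) (h.act n w) := by
  have he := h.he
  intro z hz hU
  obtain ⟨u, hu, rfl⟩ := h.exists_act hz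
  rw [h.act_y, UB_shift] at hU
  obtain ⟨u', h1, h2, h3⟩ := hC u hu (hU.mono le_rfl (by lia))
  have s1 := h.SBc h2 (by linarith)
  have s2 := h.SBc hs (by linarith)
  have b : UB f (23 * e) (-B + n) u' w.y := by
    intro i hi
    rcases le_total i (-M') with hi' | hi'
    · linarith [h3 i hi']
    · have a1 := h2 i hi'
      have a2 := hs i hi'
      have a3 := hU i hi
      have t1 := D_tri (f := f) i u' u w.y
      have t2 := D_tri (f := f) i u x.y w.y
      rw [D_comm i u' u] at t1
      linarith
  have b' := h.UBc b (by linarith)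
  refine ⟨(f ^ n) u', (h.mem_act' _ _ _).2 h1, ?_, ?_⟩
  · rw [h.act_y, UB_shift]
    intro i hi
    rcases le_total i (-B + n - M) with hi' | hi'
    · linarith [b' i hi']
    · have a1 := s1 i (by lia)
      have a2 := s2 i (by lia)
      have a3 := hU i hi
      have t1 := D_tri (f := f) i u' u w.y
      have t2 := D_tri (f := f) i u x.y w.y
      rw [D_comm i u' u] at t1
      linarith
  · intro i hi hi'
    rw [D_shift]
    linarith [s1 (i + n) (by lia)]

lemma Setup.lemT (h : Setup f S φ e M L) {B M' : ℤ} (hM' : B + 2 * M ≤ M')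
    {x w : Pt f S φ e} (hs : SB f (20 * e) (-M') x.y w.y)
    (hC : ∀ u ∈ x.K, UB f e (-M') u x.y → ∃ u' ∈ w.K, SB f (2 * e) (-M') u u' ∧
      UB f (20 * e) (-M') u' w.y)
    (hC' : ∀ u ∈ w.K, UB f e (-M') u w.y → ∃ u' ∈ x.K, SB f (2 * e) (-M') u u' ∧
      UB f (20 * e) (-M') u' x.y) {n : ℤ} (hn : 0 ≤ n) : VR B (h.act n x) (h.act n w) := by
  have he := h.he
  refine ⟨fun i hi hi' => ?_, h.lemT_half hM' hs hC hn, h.lemT_half hM' hs.symm hC' hn⟩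
  rw [h.act_y, h.act_y, D_shift]
  linarith [h.SBc hs (by linarith) (i + n) (by lia)]

lemma Setup.bracket [CompactSpace Y] (h : Setup f S φ e M L) (B : ℕ) :
    ∃ N : ℕ, ∀ x x' : Pt f S φ e, VR N x x' → ∃ w : Pt f S φ e,
      (∀ n : ℕ, VR B (h.act n x) (h.act n w)) ∧
      (∀ n : ℕ, VR B (h.act (-n) x') (h.act (-n) w)) := by
  have he := h.he
  obtain ⟨N0, hN0⟩ := h.exists_hol
  refine ⟨N0 + (B + 2 * M) + M, fun x x' hv => ?_⟩
  set M' : ℕ := B + 2 * M with hM'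
  set N : ℕ := N0 + M' + M with hN
  have hol0 : Hol 0 x x' := hN0 x x' (hv.mono (by lia) (by lia))
  have hol : ∀ {x x' : Pt f S φ e}, VR N x x' → Hol (-M') x x' := by
    intro x x' hv
    apply h.hol_act
    apply hN0
    exact h.VR_bwd' M' (hv.mono (by lia) (by lia))
  obtain ⟨z', hz', hz1, hz2⟩ := hol0 x.y x.isPt.1 (UB_refl (by linarith) _ _)
  have hzN : UB f (10 * e) N z' x'.y := by
    intro i hi
    rcases le_total i 0 with hi' | hi'
    · exact hz2 i hi'
    · have a1 := hz1 i hi'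
      have a2 := hv.1 i (by lia) (by lia)
      have t1 := D_tri (f := f) i z' x.y x'.y
      rw [D_comm i z' x.y] at t1
      linarith
  have hzN' : UB f (e / 4) (N - M) z' x'.y := h.UBc hzN (by linarith)
  let w : Pt f S φ e := ⟨(z', x'.K), h.rebase x'.isPt hz'⟩
  have hwy : w.y = z' := rfl
  have hwK : w.K = x'.K := rfl
  refine ⟨w, fun n => ?_, fun n => ?_⟩
  · refine h.lemT (B := B) (M' := M') (by lia) ?_ ?_ ?_ (by lia)
    · rw [hwy]
      intro i hi
      rcases le_total i 0 with hi' | hi'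
      · have a1 := hz2 i hi'
        have a2 := hv.1 i (by lia) (by lia)
        have t1 := D_tri (f := f) i x.y x'.y z'
        rw [D_comm i x'.y z'] at t1
        linarith
      · linarith [hz1 i hi']
    · intro u hu hU
      obtain ⟨u', h1, h2, h3⟩ := hol hv u hu (hU.mono (by linarith) le_rfl)
      refine ⟨u', h1, h2, ?_⟩
      exact (h3.trans (hzN'.symm.mono le_rfl (by lia))).mono (by linarith) le_rfl
    · intro u hu hU
      obtain ⟨u', h1, h2, h3⟩ := hol hv.symm u hu
        ((hU.trans (hzN'.mono le_rfl (by lia))).mono (by linarith) le_rfl)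
      exact ⟨u', h1, h2, h3.mono (by linarith) le_rfl⟩
  · refine ⟨fun i hi hi' => ?_, fun z hz hU => ⟨z, hz, ?_, CB_refl he.le _ _⟩,
      fun z hz hU => ⟨z, hz, ?_, CB_refl he.le _ _⟩⟩
    · rw [h.act_y, h.act_y, D_shift, hwy, D_comm]
      linarith [hzN' (i + -n) (by lia)]
    · refine (hU.trans ?_).mono (show e + e / 4 ≤ 3 * e by linarith) le_rfl
      rw [h.act_y, h.act_y, UB_shift, hwy]
      exact hzN'.symm.mono le_rfl (by lia)
    · refine (hU.trans ?_).mono (show e + e / 4 ≤ 3 * e by linarith) le_rfl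
      rw [h.act_y, h.act_y, UB_shift, hwy]
      exact hzN'.mono le_rfl (by lia)

lemma Setup.subK (h : Setup f S φ e M L) {N : ℕ} (hN : ∀ x x' : Pt f S φ e, VR N x x' → Hol 0 x x')
    {x x' : Pt f S φ e} (hy : x.y = x'.y)
    (hv : ∀ n0 : ℤ, ∃ n ≤ n0, VR N (h.act n x) (h.act n x')) : x = x' := by
  refine Pt.ext hy ((h.Deq hy fun n0 => ?_).antisymm (h.Deq hy.symm fun n0 => ?_))
  · obtain ⟨n, h1, h2⟩ := hv n0
    exact ⟨n, h1, h.hol_act (hN _ _ h2)⟩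
  · obtain ⟨n, h1, h2⟩ := hv n0
    exact ⟨n, h1, h.hol_act (hN _ _ h2.symm)⟩

lemma Setup.expansive (h : Setup f S φ e M L) {N : ℕ}
    (hN : ∀ x x' : Pt f S φ e, VR N x x' → Hol 0 x x')
    {x x' : Pt f S φ e} (hv : ∀ n : ℤ, VR N (h.act n x) (h.act n x')) : x = x' := by
  have he := h.he
  refine h.subK hN (h.exp _ _ fun i => ?_) fun n0 => ⟨n0, le_rfl, hv n0⟩
  have := VR_zero_D (by lia) (hv i)
  rw [h.act_y, h.act_y] at this
  change D f i _ _ ≤ e at this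
  linarith

lemma Setup.exists_metric [CompactSpace Y] (h : Setup f S φ e M L) :
    ∃ m : MetricSpace (Pt f S φ e), (uniformity (Pt f S φ e)).HasBasis (fun _ : ℕ => True)
      (fun N => {p | VR (N : ℤ) p.1 p.2}) ∧ CompactSpace (Pt f S φ e) := by
  letI u := h.uniform
  haveI := h.t0
  haveI : IsCountablyGenerated (uniformity (Pt f S φ e)) := h.basis.isCountablyGenerated
  exact ⟨UniformSpace.metricSpace (Pt f S φ e), h.basis, h.compact⟩

lemma Setup.final [CompactSpace Y] (h : Setup f S φ e M L) :
    ∃ (X : Type) (mX : MetricSpace X) (cX : CompactSpace X) (F : Equiv.Perm X),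
      IsSmale F ∧ ∃ π : X → Y, IsFactorMap F f π ∧ UResolving F π := by
  have he := h.he
  obtain ⟨m, hbas, hcomp⟩ := h.exists_metric
  have hd1 : ∀ N : ℕ, ∃ δ > 0, ∀ x x' : Pt f S φ e, dist x x' < δ → VR N x x' := by
    intro N
    obtain ⟨δ, hδ, h1⟩ := Metric.mem_uniformity_dist.1 (hbas.mem_of_mem (i := N) trivial)
    exact ⟨δ, hδ, fun x x' hx => h1 hx⟩
  have hd2 : ∀ ε > 0, ∃ N : ℕ, ∀ x x' : Pt f S φ e, VR N x x' → dist x x' < ε := by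
    intro ε hε
    obtain ⟨N, -, hN⟩ := hbas.mem_iff.1 (Metric.dist_mem_uniformity hε)
    exact ⟨N, fun x x' hx => hN (show (x, x') ∈ _ from hx)⟩
  obtain ⟨N0, hN0⟩ := h.exists_hol
  obtain ⟨δ0, hδ0, hd0⟩ := hd1 N0
  refine ⟨Pt f S φ e, m, hcomp, h.F, ⟨?_, ?_, ⟨δ0 / 2, by positivity, ?_⟩, ?_⟩, Pt.y,
    ⟨?_, ?_, ?_⟩, ?_⟩
  · refine UniformContinuous.continuous (Metric.uniformContinuous_iff.2 fun ε hε => ?_)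
    obtain ⟨N, hN⟩ := hd2 ε hε
    obtain ⟨δ, hδ, hd⟩ := hd1 (N + 1)
    exact ⟨δ, hδ, fun a b hab => hN _ _ (h.VR_fwd (by lia) (by exact_mod_cast hd _ _ hab))⟩
  · refine UniformContinuous.continuous (Metric.uniformContinuous_iff.2 fun ε hε => ?_)
    obtain ⟨N, hN⟩ := hd2 ε hε
    obtain ⟨δ, hδ, hd⟩ := hd1 (N + 1)
    exact ⟨δ, hδ, fun a b hab => hN _ _ (h.VR_bwd (by exact_mod_cast hd _ _ hab))⟩
  · intro p q hpq
    by_contra! hcon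
    refine hpq (h.expansive hN0 fun n => hd0 _ _ ?_)
    have := hcon n
    rw [h.F_zpow, h.F_zpow] at this
    linarith
  · refine ⟨δ0 / 4, by positivity, fun ε hε hε' => ?_⟩
    obtain ⟨B, hB⟩ := hd2 ε hε
    obtain ⟨N, hN⟩ := h.bracket B
    obtain ⟨δ, hδ, hd⟩ := hd1 N
    refine ⟨δ, hδ, fun x x' hxx => ?_⟩
    obtain ⟨w, hw1, hw2⟩ := hN x x' (hd _ _ hxx)
    refine ⟨w, ⟨fun n => ?_, fun n => ?_⟩, ?_⟩
    · rw [h.F_zpow, h.F_zpow]; exact hB _ _ (hw1 n)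
    · rw [h.F_zpow, h.F_zpow]; exact hB _ _ (hw2 n)
    · rintro v ⟨hv1, hv2⟩
      refine h.expansive hN0 fun n => hd0 _ _ ?_
      have key : ∀ a : Pt f S φ e, dist a (h.act n v) < ε → dist a (h.act n w) < ε →
          dist (h.act n v) (h.act n w) < δ0 := by
        intro a h1 h2
        have := dist_triangle_left (h.act n v) (h.act n w) a
        linarith
      rcases Int.eq_nat_or_neg n with ⟨k, rfl | rfl⟩
      · have h1 := hv1 k
        rw [h.F_zpow, h.F_zpow] at h1
        exact key _ h1 (hB _ _ (hw1 k))
      · have h1 := hv2 k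
        rw [h.F_zpow, h.F_zpow] at h1
        exact key _ h1 (hB _ _ (hw2 k))
  · refine UniformContinuous.continuous (Metric.uniformContinuous_iff.2 fun ε hε => ?_)
    obtain ⟨N, hN⟩ := h.uexp ε hε
    obtain ⟨δ, hδ, hd⟩ := hd1 N
    exact ⟨δ, hδ, fun a b hab => hN _ _ ((hd _ _ hab).1.mono (by linarith) le_rfl)⟩
  · intro y
    exact ⟨⟨(y, _), h.maximal y⟩, rfl⟩
  · intro x
    show (f ^ (1 : ℤ)) x.y = f x.y
    rw [zpow_one]
  · intro x w1 hw1 w2 hw2 hy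
    refine h.subK hN0 hy fun n0 => ?_
    have hw1' : Tendsto _ _ _ := hw1
    have hw2' : Tendsto _ _ _ := hw2
    have e1 := hw1'.eventually (gt_mem_nhds (show (0 : ℝ) < δ0 / 2 by positivity))
    have e2 := hw2'.eventually (gt_mem_nhds (show (0 : ℝ) < δ0 / 2 by positivity))
    obtain ⟨n, h1, h2, h3⟩ := (e1.and (e2.and (eventually_ge_atTop n0.natAbs))).exists
    rw [h.F_zpow, h.F_zpow] at h1 h2
    refine ⟨-n, by lia, hd0 _ _ ?_⟩
    have := dist_triangle_left (h.act (-n) w1) (h.act (-n) w2) (h.act (-n) x)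
    linarith

end main

end FPS

/-- Every finitely presented system has a Smale space extension with a
u-resolving factor map. -/
theorem stmt5 {Y : Type} [MetricSpace Y] [CompactSpace Y] (f : Equiv.Perm Y)
    (hY : FinitelyPresented f) :
    ∃ (X : Type) (mX : MetricSpace X) (cX : CompactSpace X) (F : Equiv.Perm X),
      IsSmale F ∧ ∃ π : X → Y, IsFactorMap F f π ∧ UResolving F π := by
  obtain ⟨A, S, φ, e, M, L, h⟩ := FPS.setup_of hY
  exact h.final
end

section
/- If (Y,f) is a transitive finitely presented system, then there exists a transitive Smale space (X,F) and a u-resolving factor map π₊ : X → Y which is one-to-one almost everywhere, i.e., there is a residual subset of Y whose points have a unique π₊-preimage. -/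
open Filter Topology Set

theorem abstract_completion {R Y : Type} [MetricSpace Y] [CompactSpace Y]
    (E : ℕ → R → R → Prop)
    (hrefl : ∀ N y, E N y y) (hsymm : ∀ N y y', E N y y' → E N y' y)
    (hanti : ∀ N M, N ≤ M → ∀ y y', E M y y' → E N y y')
    (hcomp : ∀ N, ∃ M, ∀ y₁ y₂ y₃, E M y₁ y₂ → E M y₂ y₃ → E N y₁ y₃)
    (htb : ∀ N, ∃ (C : Type) (_ : Finite C) (col : R → C), ∀ y y', col y = col y' → E N y y')
    (g : Equiv.Perm R)
    (hg : ∀ N, ∃ M, ∀ y y', E M y y' → E N (g y) (g y'))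
    (hg' : ∀ N, ∃ M, ∀ y y', E M y y' → E N (g.symm y) (g.symm y'))
    (p : R → Y) (hp : ∀ ε > 0, ∃ N, ∀ y y', E N y y' → dist (p y) (p y') < ε) :
    ∃ (X : Type) (_ : MetricSpace X) (_ : CompactSpace X) (F : Equiv.Perm X) (ι : R → X)
      (π : X → Y), DenseRange ι ∧ (∀ y, F (ι y) = ι (g y)) ∧ Continuous F ∧ Continuous F.symm ∧
      Continuous π ∧ (∀ y, π (ι y) = p y) ∧
      (∀ ε > 0, ∃ N, ∀ y y', E N y y' → dist (ι y) (ι y') < ε) ∧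
      (∀ N, ∃ δ > 0, ∀ y y', dist (ι y) (ι y') < δ → E N y y') := by
  classical
  let Bs : FilterBasis (R × R) :=
    { sets := Set.range (fun N => {q : R × R | E N q.1 q.2})
      nonempty := ⟨_, ⟨0, rfl⟩⟩
      inter_sets := by
        rintro _ _ ⟨N, rfl⟩ ⟨M, rfl⟩
        refine ⟨_, ⟨max N M, rfl⟩, ?_⟩
        rintro ⟨a, b⟩ h
        exact ⟨hanti _ _ (le_max_left _ _) _ _ h, hanti _ _ (le_max_right _ _) _ _ h⟩ }
  let core : UniformSpace.Core R := UniformSpace.Core.mkOfBasis Bs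
    (by rintro _ ⟨N, rfl⟩ x; exact hrefl N x)
    (by rintro _ ⟨N, rfl⟩; exact ⟨_, ⟨N, rfl⟩, fun q h => hsymm _ _ _ h⟩)
    (by
      rintro _ ⟨N, rfl⟩
      obtain ⟨M, hM⟩ := hcomp N
      refine ⟨_, ⟨M, rfl⟩, ?_⟩
      rintro ⟨a, b⟩ ⟨c, h1, h2⟩
      exact hM _ _ _ h1 h2)
  letI uR : UniformSpace R := UniformSpace.ofCore core
  have hbasis : (uniformity R).HasBasis (fun _ : ℕ => True) (fun N => {q : R × R | E N q.1 q.2}) := by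
    have h0 : uniformity R = Bs.filter := rfl
    rw [h0]
    constructor
    intro t
    rw [FilterBasis.mem_filter_iff]
    constructor
    · rintro ⟨_, ⟨N, rfl⟩, h⟩
      exact ⟨N, trivial, h⟩
    · rintro ⟨N, _, h⟩
      exact ⟨_, ⟨N, rfl⟩, h⟩
  haveI : (uniformity R).IsCountablyGenerated := hbasis.isCountablyGenerated
  letI mR : PseudoMetricSpace R := UniformSpace.pseudoMetricSpace R
  have hgu : UniformContinuous g := by
    rw [hbasis.uniformContinuous_iff hbasis]
    intro N _
    obtain ⟨M, hM⟩ := hg N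
    exact ⟨M, trivial, fun x y h => hM _ _ h⟩
  have hgu' : UniformContinuous g.symm := by
    rw [hbasis.uniformContinuous_iff hbasis]
    intro N _
    obtain ⟨M, hM⟩ := hg' N
    exact ⟨M, trivial, fun x y h => hM _ _ h⟩
  have hpu : UniformContinuous p := by
    rw [hbasis.uniformContinuous_iff Metric.uniformity_basis_dist]
    intro ε hε
    obtain ⟨M, hM⟩ := hp ε hε
    exact ⟨M, trivial, fun x y h => hM _ _ h⟩
  have htbR : TotallyBounded (Set.univ : Set R) := by
    rw [hbasis.totallyBounded_iff]
    intro N _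
    obtain ⟨C, hC, col, hcol⟩ := htb N
    by_cases hne : Nonempty R
    · refine ⟨Set.range (fun c : C => Function.invFun col c), Set.finite_range _, ?_⟩
      intro y _
      simp only [Set.mem_iUnion]
      refine ⟨_, ⟨col y, rfl⟩, ?_⟩
      apply hcol
      exact (Function.invFun_eq ⟨y, rfl⟩).symm
    · exact ⟨∅, Set.finite_empty, fun y _ => (hne ⟨y⟩).elim⟩
  have hcX : CompactSpace (UniformSpace.Completion R) := by
    constructor
    rw [isCompact_iff_totallyBounded_isComplete]
    refine ⟨?_, isComplete_univ⟩
    have h1 := htbR.image (UniformSpace.Completion.uniformContinuous_coe R)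
    have h2 := h1.closure
    rw [Set.image_univ, UniformSpace.Completion.denseRange_coe.closure_range] at h2
    exact h2
  let F : Equiv.Perm (UniformSpace.Completion R) :=
    { toFun := UniformSpace.Completion.map g
      invFun := UniformSpace.Completion.map g.symm
      left_inv := fun x => by
        have := congrFun (UniformSpace.Completion.map_comp hgu' hgu) x
        simp only [Function.comp_apply] at this
        rw [this, Equiv.symm_comp_self, UniformSpace.Completion.map_id]; rfl
      right_inv := fun x => by
        have := congrFun (UniformSpace.Completion.map_comp hgu hgu') x
        simp only [Function.comp_apply] at this
        rw [this, Equiv.self_comp_symm, UniformSpace.Completion.map_id]; rfl }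
  refine ⟨UniformSpace.Completion R, inferInstance, hcX, F, fun y => (y : UniformSpace.Completion R),
    UniformSpace.Completion.extension p, UniformSpace.Completion.denseRange_coe, ?_, ?_, ?_, ?_, ?_, ?_, ?_⟩
  · intro y; exact UniformSpace.Completion.map_coe hgu y
  · exact UniformSpace.Completion.continuous_map
  · exact UniformSpace.Completion.continuous_map
  · exact UniformSpace.Completion.continuous_extension
  · intro y; exact UniformSpace.Completion.extension_coe hpu y
  · intro ε hε
    have := Metric.dist_mem_uniformity (α := R) hε
    obtain ⟨N, _, hN⟩ := hbasis.mem_iff.1 this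
    refine ⟨N, fun y y' h => ?_⟩
    rw [UniformSpace.Completion.dist_eq]
    exact hN (show (y, y') ∈ _ from h)
  · intro N
    have h := hbasis.mem_of_mem (i := N) trivial
    obtain ⟨δ, hδ, h⟩ := Metric.mem_uniformity_dist.1 h
    refine ⟨δ, hδ, fun y y' h' => ?_⟩
    rw [UniformSpace.Completion.dist_eq] at h'
    exact h h'

theorem nested_empty {Z : Type*} [TopologicalSpace Z] [CompactSpace Z] (C : ℕ → Set Z)
    (ha : ∀ n, C (n + 1) ⊆ C n) (hc : ∀ n, IsClosed (C n)) (h : ⋂ n, C n = ∅) : ∃ n, C n = ∅ := by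
  by_contra! hne
  have := IsCompact.nonempty_iInter_of_sequence_nonempty_isCompact_isClosed C ha
    hne (hc 0).isCompact hc
  rw [h] at this
  exact Set.not_nonempty_empty this

theorem zpow_semi {X R : Type*} (F : Equiv.Perm X) (g : Equiv.Perm R) (ι : R → X)
    (h : ∀ y, F (ι y) = ι (g y)) (n : ℤ) (y : R) : (F ^ n) (ι y) = ι ((g ^ n) y) := by
  induction n generalizing y with
  | zero => simp
  | succ n ih => rw [zpow_add_one, zpow_add_one, Equiv.Perm.mul_apply, Equiv.Perm.mul_apply, h, ih]
  | pred n ih =>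
    rw [zpow_sub_one, zpow_sub_one, Equiv.Perm.mul_apply, Equiv.Perm.mul_apply, ← ih]
    congr 1
    rw [Equiv.Perm.inv_eq_iff_eq, h]
    simp

theorem continuous_zpow_perm {X : Type*} [TopologicalSpace X] (f : Equiv.Perm X)
    (h1 : Continuous f) (h2 : Continuous f.symm) (n : ℤ) : Continuous (f ^ n) := by
  induction n with
  | zero => exact continuous_id
  | succ n ih => rw [zpow_add_one, Equiv.Perm.coe_mul]; exact ih.comp h1
  | pred n ih => rw [zpow_sub_one, Equiv.Perm.coe_mul]; exact ih.comp h2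

theorem zz {X : Type*} (f : Equiv.Perm X) (m n : ℤ) (x : X) :
    (f ^ m) ((f ^ n) x) = (f ^ (m + n)) x := by
  rw [zpow_add, Equiv.Perm.mul_apply]

/-- Uniform expansiveness. -/
theorem unif_exp {Y : Type*} [MetricSpace Y] [CompactSpace Y] (f : Equiv.Perm Y)
    (h1 : Continuous f) (h2 : Continuous f.symm) (c : ℝ) (hc : Expansive f c) (η : ℝ) (hη : 0 < η) :
    ∃ J : ℕ, ∀ (p q : Y) (k : ℤ), (∀ l, k - J ≤ l → l ≤ k + J → dist ((f ^ l) p) ((f ^ l) q) ≤ c) →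
      dist ((f ^ k) p) ((f ^ k) q) < η := by
  obtain ⟨J, hJ⟩ := nested_empty (fun J : ℕ => {x : Y × Y | η ≤ dist x.1 x.2 ∧
    ∀ l : ℤ, -(J : ℤ) ≤ l → l ≤ J → dist ((f ^ l) x.1) ((f ^ l) x.2) ≤ c})
    (by
      rintro n x ⟨ha, hb⟩
      exact ⟨ha, fun l hl hl' => hb l (by push_cast; omega) (by push_cast; omega)⟩)
    (by
      intro n
      simp only [Set.ofPred_and, Set.ofPred_forall]
      refine (isClosed_le continuous_const (by fun_prop)).inter ?_
      refine isClosed_iInter fun l => isClosed_iInter fun _ => isClosed_iInter fun _ => ?_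
      have := continuous_zpow_perm f h1 h2 l
      exact isClosed_le (by fun_prop) continuous_const)
    (by
      rw [Set.eq_empty_iff_forall_notMem]
      intro x hx
      rw [Set.mem_iInter] at hx
      have hne : x.1 ≠ x.2 := by
        intro h
        have := (hx 0).1
        rw [h, dist_self] at this
        linarith
      obtain ⟨n, hn⟩ := hc _ _ hne
      have := (hx n.natAbs).2 n (by omega) (by omega)
      linarith)
  refine ⟨J, fun p q k h => ?_⟩
  by_contra! hcon
  have : ((f ^ k) p, (f ^ k) q) ∈ (∅ : Set (Y × Y)) := by
    rw [← hJ]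
    refine ⟨hcon, fun l hl hl' => ?_⟩
    simp only [zz]
    exact h _ (by omega) (by omega)
  exact this

/-- A symbolic presentation of `(Y, f)` with cells of diameter at most `e`. -/
structure Pres {Y : Type} [MetricSpace Y] (f : Equiv.Perm Y) (e : ℝ) where
  S : Type
  A : Type
  finA : Finite A
  σ : Equiv.Perm S
  cell : S → A
  φ : S → Y
  semi : ∀ s, f (φ s) = φ (σ s)
  surj : Function.Surjective φ
  splice : ∀ (m : ℤ) (s u : S), cell ((σ ^ m) s) = cell ((σ ^ m) u) →
    ∃ v, (∀ k ≤ m, cell ((σ ^ k) v) = cell ((σ ^ k) s)) ∧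
      (∀ k ≥ m, cell ((σ ^ k) v) = cell ((σ ^ k) u))
  small : ∀ s u, cell s = cell u → dist (φ s) (φ u) ≤ e
  closed : ∀ a, IsClosed (φ '' {s | cell s = a})

namespace Pres

variable {Y : Type} [MetricSpace Y] {f : Equiv.Perm Y} {e : ℝ} (P : Pres f e)

theorem small' (k : ℤ) (s u : P.S) (h : P.cell ((P.σ ^ k) s) = P.cell ((P.σ ^ k) u)) :
    dist ((f ^ k) (P.φ s)) ((f ^ k) (P.φ u)) ≤ e := by
  rw [zpow_semi f P.σ P.φ P.semi, zpow_semi f P.σ P.φ P.semi]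
  exact P.small _ _ h

/-- Cells at time `m` of symbolic points that stay `r`-close to `y` up to time `m`. -/
def B (r : ℝ) (m : ℤ) (y : Y) : Set P.A :=
  {a | ∃ s, P.cell ((P.σ ^ m) s) = a ∧ ∀ k ≤ m, dist ((f ^ k) (P.φ s)) ((f ^ k) y) ≤ r}

/-- Compatibility at time `m`. -/
def K (m : ℤ) (y y' : Y) : Prop :=
  dist ((f ^ m) y) ((f ^ m) y') ≤ e ∧ P.B e m y ⊆ P.B (3 * e) m y' ∧ P.B e m y' ⊆ P.B (3 * e) m y

/-- Compatibility on the time interval `[-N, N]`. -/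
def E (N : ℕ) (y y' : Y) : Prop := ∀ m : ℤ, -(N : ℤ) ≤ m → m ≤ N → P.K m y y'

/-- Cells of the symbolic preimages of `y`. -/
def G (y : Y) : Set P.A := {a | ∃ s, P.cell s = a ∧ P.φ s = y}

theorem B_mono {r r' : ℝ} (h : r ≤ r') (m : ℤ) (y : Y) : P.B r m y ⊆ P.B r' m y := by
  rintro a ⟨s, hs, hk⟩
  exact ⟨s, hs, fun k hkm => (hk k hkm).trans h⟩

theorem B_shift (r : ℝ) (m n : ℤ) (y : Y) : P.B r m ((f ^ n) y) = P.B r (m + n) y := by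
  ext a
  constructor
  · rintro ⟨s, hs, hk⟩
    refine ⟨(P.σ ^ (-n)) s, ?_, fun k hkm => ?_⟩
    · rw [zz]; simpa using hs
    · have := hk (k - n) (by omega)
      rw [zz] at this
      rw [← zpow_semi f P.σ P.φ P.semi, zz]
      simpa [sub_eq_add_neg] using this
  · rintro ⟨s, hs, hk⟩
    refine ⟨(P.σ ^ n) s, ?_, fun k hkm => ?_⟩
    · rw [zz]; exact hs
    · have := hk (k + n) (by omega)
      rw [← zpow_semi f P.σ P.φ P.semi, zz, zz]
      exact this

theorem K_shift (m n : ℤ) (y y' : Y) : P.K m ((f ^ n) y) ((f ^ n) y') ↔ P.K (m + n) y y' := by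
  unfold K
  rw [P.B_shift, P.B_shift, P.B_shift, P.B_shift, zz, zz]

theorem K_symm {m : ℤ} {y y' : Y} (h : P.K m y y') : P.K m y' y :=
  ⟨by rw [dist_comm]; exact h.1, h.2.2, h.2.1⟩

theorem K_refl (he : 0 < e) (m : ℤ) (y : Y) : P.K m y y :=
  ⟨by rw [dist_self]; exact he.le, P.B_mono (by linarith) _ _, P.B_mono (by linarith) _ _⟩

theorem splice_near (J : ℕ) (hJ : ∀ (p q : Y) (k : ℤ),
  (∀ l, k - J ≤ l → l ≤ k + J → dist ((f ^ l) p) ((f ^ l) q) ≤ 4 * e) →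
      dist ((f ^ k) p) ((f ^ k) q) < e / 2)
    (he : 0 < e) (m i : ℤ) (u : P.S) (y' : Y)
    (hu : P.cell ((P.σ ^ m) u) ∈ P.B (3 * e) m y') (hmi : m + J ≤ i)
    (hd : ∀ k, m ≤ k → k ≤ i → dist ((f ^ k) (P.φ u)) ((f ^ k) y') ≤ 2 * e) :
    ∃ v, (∀ k ≥ m, P.cell ((P.σ ^ k) v) = P.cell ((P.σ ^ k) u)) ∧
      (∀ k ≤ i, dist ((f ^ k) (P.φ v)) ((f ^ k) y') ≤ 3 * e) ∧
      (∀ k ≤ i - J, dist ((f ^ k) (P.φ v)) ((f ^ k) y') ≤ e) := by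
  obtain ⟨s, hs, hk⟩ := hu
  obtain ⟨v, hv1, hv2⟩ := P.splice m s u hs
  have h4 : ∀ k ≤ m, dist ((f ^ k) (P.φ v)) ((f ^ k) y') ≤ 4 * e := fun k hkm => by
    have h1 := P.small' k v s (hv1 k hkm)
    have h2 := hk k hkm
    linarith [dist_triangle ((f ^ k) (P.φ v)) ((f ^ k) (P.φ s)) ((f ^ k) y')]
  have h3 : ∀ k, m ≤ k → k ≤ i → dist ((f ^ k) (P.φ v)) ((f ^ k) y') ≤ 3 * e := fun k hkm hki => by
    have h1 := P.small' k v u (hv2 k hkm)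
    have h2 := hd k hkm hki
    linarith [dist_triangle ((f ^ k) (P.φ v)) ((f ^ k) (P.φ u)) ((f ^ k) y')]
  have h1 : ∀ k ≤ i - J, dist ((f ^ k) (P.φ v)) ((f ^ k) y') ≤ e := fun k hki => by
    have := hJ (P.φ v) y' k (fun l hl hl' => by
      rcases le_total l m with h | h
      · exact h4 l h
      · linarith [h3 l h (by omega)])
    linarith
  refine ⟨v, hv2, fun k hki => ?_, h1⟩
  rcases le_total k m with h | h
  · linarith [h1 k (by omega)]
  · exact h3 k h hki

theorem propagate (J : ℕ) (hJ : ∀ (p q : Y) (k : ℤ),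
  (∀ l, k - J ≤ l → l ≤ k + J → dist ((f ^ l) p) ((f ^ l) q) ≤ 4 * e) →
      dist ((f ^ k) p) ((f ^ k) q) < e / 2)
    (he : 0 < e) (m i : ℤ) (y y' : Y) (hB : P.B e m y ⊆ P.B (3 * e) m y')
    (hmi : m + J ≤ i) (hd : ∀ k, m ≤ k → k ≤ i → dist ((f ^ k) y) ((f ^ k) y') ≤ e) :
    P.B e i y ⊆ P.B (3 * e) i y' := by
  rintro a ⟨u, rfl, hu⟩
  obtain ⟨v, hv1, hv2, -⟩ := P.splice_near J hJ he m i u y'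
    (hB ⟨u, rfl, fun k hk => hu k (by omega)⟩) hmi (fun k hk hk' => by
      linarith [hu k hk', hd k hk hk', dist_triangle ((f ^ k) (P.φ u)) ((f ^ k) y) ((f ^ k) y')])
  exact ⟨v, hv1 i (by omega), hv2⟩

theorem compose (J : ℕ) (hJ : ∀ (p q : Y) (k : ℤ),
  (∀ l, k - J ≤ l → l ≤ k + J → dist ((f ^ l) p) ((f ^ l) q) ≤ 4 * e) →
      dist ((f ^ k) p) ((f ^ k) q) < e / 2)
    (he : 0 < e) (m i : ℤ) (y₁ y₂ y₃ : Y) (h12 : P.B e m y₁ ⊆ P.B (3 * e) m y₂)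
    (h23 : P.B e m y₂ ⊆ P.B (3 * e) m y₃) (hmi : m + J ≤ i)
    (d12 : ∀ k, m ≤ k → k ≤ i → dist ((f ^ k) y₁) ((f ^ k) y₂) ≤ e)
    (d13 : ∀ k, m ≤ k → k ≤ i → dist ((f ^ k) y₁) ((f ^ k) y₃) ≤ e) :
    P.B e i y₁ ⊆ P.B (3 * e) i y₃ := by
  rintro a ⟨u, rfl, hu⟩
  obtain ⟨v, hv1, -, hv2⟩ := P.splice_near J hJ he m i u y₂
    (h12 ⟨u, rfl, fun k hk => hu k (by omega)⟩) hmi (fun k hk hk' => by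
      linarith [hu k hk', d12 k hk hk', dist_triangle ((f ^ k) (P.φ u)) ((f ^ k) y₁) ((f ^ k) y₂)])
  obtain ⟨w, hw1, hw2, -⟩ := P.splice_near J hJ he m i u y₃
    (h23 ⟨v, hv1 m le_rfl, fun k hk => hv2 k (by omega)⟩) hmi (fun k hk hk' => by
      linarith [hu k hk', d13 k hk hk', dist_triangle ((f ^ k) (P.φ u)) ((f ^ k) y₁) ((f ^ k) y₃)])
  exact ⟨w, hw1 i (by omega), hw2⟩

theorem E_comp (J : ℕ) (hJ : ∀ (p q : Y) (k : ℤ),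
  (∀ l, k - J ≤ l → l ≤ k + J → dist ((f ^ l) p) ((f ^ l) q) ≤ 4 * e) →
      dist ((f ^ k) p) ((f ^ k) q) < e / 2)
    (he : 0 < e) (N : ℕ) (y₁ y₂ y₃ : Y) (h12 : P.E (N + 2 * J) y₁ y₂)
    (h23 : P.E (N + 2 * J) y₂ y₃) : P.E N y₁ y₃ := by
  have d12 : ∀ k : ℤ, -(N + J : ℤ) ≤ k → k ≤ N + J → dist ((f ^ k) y₁) ((f ^ k) y₂) < e / 2 :=
    fun k hk hk' => hJ _ _ _ fun l hl hl' => by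
      linarith [(h12 l (by push_cast; omega) (by push_cast; omega)).1]
  have d23 : ∀ k : ℤ, -(N + J : ℤ) ≤ k → k ≤ N + J → dist ((f ^ k) y₂) ((f ^ k) y₃) < e / 2 :=
    fun k hk hk' => hJ _ _ _ fun l hl hl' => by
      linarith [(h23 l (by push_cast; omega) (by push_cast; omega)).1]
  have d13 : ∀ k : ℤ, -(N + J : ℤ) ≤ k → k ≤ N + J → dist ((f ^ k) y₁) ((f ^ k) y₃) ≤ e :=
    fun k hk hk' => by
      linarith [d12 k hk hk', d23 k hk hk', dist_triangle ((f ^ k) y₁) ((f ^ k) y₂) ((f ^ k) y₃)]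
  intro i hi hi'
  have e12 := h12 (-(N + J : ℤ)) (by push_cast; omega) (by push_cast; omega)
  have e23 := h23 (-(N + J : ℤ)) (by push_cast; omega) (by push_cast; omega)
  refine ⟨d13 i (by omega) (by omega), ?_, ?_⟩
  · exact P.compose J hJ he (-(N + J : ℤ)) i y₁ y₂ y₃ e12.2.1 e23.2.1 (by omega)
      (fun k hk hk' => by linarith [d12 k hk (by omega)]) (fun k hk hk' => d13 k hk (by omega))
  · exact P.compose J hJ he (-(N + J : ℤ)) i y₃ y₂ y₁ e23.2.2 e12.2.2 (by omega)
      (fun k hk hk' => by rw [dist_comm]; linarith [d23 k hk (by omega)])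
      (fun k hk hk' => by rw [dist_comm]; exact d13 k hk (by omega))

theorem B_of_near (k : ℤ) (y y' : Y) (h : ∀ l ≤ k, dist ((f ^ l) y) ((f ^ l) y') ≤ e) (he : 0 < e) :
    P.B e k y ⊆ P.B (3 * e) k y' := by
  rintro a ⟨u, rfl, hu⟩
  refine ⟨u, rfl, fun l hl => ?_⟩
  linarith [hu l hl, h l hl, dist_triangle ((f ^ l) (P.φ u)) ((f ^ l) y) ((f ^ l) y')]

theorem bracket (J : ℕ) (hJ : ∀ (p q : Y) (k : ℤ),
  (∀ l, k - J ≤ l → l ≤ k + J → dist ((f ^ l) p) ((f ^ l) q) ≤ 4 * e) →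
      dist ((f ^ k) p) ((f ^ k) q) < e / 2)
    (he : 0 < e) (N : ℕ) (y y' : Y) (h : P.E (N + 4 * J) y y') :
    ∃ z, (∀ k ≤ (N : ℤ), P.K k y' z) ∧ (∀ k ≥ -(N : ℤ), P.K k y z) := by
  obtain ⟨t, rfl⟩ := P.surj y
  obtain ⟨s, hs1, hs2, hs3⟩ := P.splice_near J hJ he 0 (N + 4 * J) t y'
    ((h 0 (by push_cast; omega) (by push_cast; omega)).2.1
      ⟨t, rfl, fun k _ => by rw [dist_self]; exact he.le⟩) (by omega)
    (fun k hk hk' => by linarith [(h k (by push_cast; omega) (by push_cast; omega)).1])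
  set z := P.φ s
  set y := P.φ t
  have dzy' : ∀ k ≤ (N + 3 * J : ℤ), dist ((f ^ k) z) ((f ^ k) y') ≤ e :=
    fun k hk => hs3 k (by omega)
  have kzy' : ∀ k ≤ (N + 3 * J : ℤ), P.K k y' z := fun k hk =>
    ⟨by rw [dist_comm]; exact dzy' k hk,
      P.B_of_near k _ _ (fun l hl => by rw [dist_comm]; exact dzy' l (by omega)) he,
      P.B_of_near k _ _ (fun l hl => dzy' l (by omega)) he⟩
  have dzy2 : ∀ k ≥ -(N + 4 * J : ℤ), dist ((f ^ k) z) ((f ^ k) y) ≤ 4 * e := fun k hk => by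
    rcases le_total 0 k with h0 | h0
    · linarith [P.small' k s t (hs1 k h0)]
    · have h1 := dzy' k (by omega)
      have h2 := (h k (by push_cast; omega) (by push_cast; omega)).1
      rw [dist_comm] at h2
      linarith [dist_triangle ((f ^ k) z) ((f ^ k) y') ((f ^ k) y)]
  have dzy : ∀ k ≥ -(N + 3 * J : ℤ), dist ((f ^ k) z) ((f ^ k) y) ≤ e := fun k hk => by
    linarith [hJ z y k fun l hl hl' => dzy2 l (by omega)]
  have kyy' := h (-(N + 2 * J : ℤ)) (by push_cast; omega) (by push_cast; omega)
  have c1 : P.B e (-(N + J : ℤ)) z ⊆ P.B (3 * e) (-(N + J : ℤ)) y :=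
    P.compose J hJ he (-(N + 2 * J : ℤ)) _ z y' y (kzy' _ (by omega)).2.2 kyy'.2.2 (by omega)
      (fun k hk hk' => dzy' k (by omega)) (fun k hk hk' => dzy k (by omega))
  have c2 : P.B e (-(N + J : ℤ)) y ⊆ P.B (3 * e) (-(N + J : ℤ)) z :=
    P.compose J hJ he (-(N + 2 * J : ℤ)) _ y y' z kyy'.2.1 (kzy' _ (by omega)).2.1 (by omega)
      (fun k hk hk' => (h k (by push_cast; omega) (by push_cast; omega)).1)
      (fun k hk hk' => by rw [dist_comm]; exact dzy k (by omega))
  refine ⟨z, fun k hk => kzy' k (by omega), fun k hk => ⟨?_, ?_, ?_⟩⟩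
  · rw [dist_comm]; exact dzy k (by omega)
  · exact P.propagate J hJ he _ k y z c2 (by omega) (fun l hl hl' => by
      rw [dist_comm]; exact dzy l (by omega))
  · exact P.propagate J hJ he _ k z y c1 (by omega) (fun l hl hl' => dzy l (by omega))

theorem exists_min [Nonempty Y] : ∃ y₀ : Y, ∃ η > 0, ∀ y, dist y y₀ < η → P.G y = P.G y₀ := by
  haveI := P.finA
  obtain ⟨y₀, hy₀⟩ : ∃ y₀ : Y, ∀ y, (P.G y₀).ncard ≤ (P.G y).ncard := by
    refine ⟨Function.argmin (fun y => (P.G y).ncard), fun y => ?_⟩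
    exact Function.argmin_le (fun y => (P.G y).ncard) y
  have : ∀ᶠ y in nhds y₀, ∀ a, a ∈ P.G y → a ∈ P.G y₀ := by
    rw [Filter.eventually_all]
    intro a
    by_cases ha : a ∈ P.G y₀
    · exact Filter.Eventually.of_forall fun _ _ => ha
    · have h1 : y₀ ∈ (P.φ '' {s | P.cell s = a})ᶜ := fun ⟨s, hs, h⟩ => ha ⟨s, hs, h⟩
      filter_upwards [(P.closed a).isOpen_compl.mem_nhds h1] with y hy hay
      obtain ⟨s, hs, h⟩ := hay
      exact (hy ⟨s, hs, h⟩).elim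
  obtain ⟨η, hη, h⟩ := Metric.eventually_nhds_iff.1 this
  exact ⟨y₀, η, hη, fun y hy => Set.eq_of_subset_of_ncard_le (h hy) (hy₀ y)⟩

theorem generic (J : ℕ) (hJ : ∀ (p q : Y) (k : ℤ),
  (∀ l, k - J ≤ l → l ≤ k + J → dist ((f ^ l) p) ((f ^ l) q) ≤ 4 * e) →
      dist ((f ^ k) p) ((f ^ k) q) < e / 2)
    (he : 0 < e) (y₀ : Y) (η : ℝ)
    (hG : ∀ y, dist y y₀ < η → P.G y = P.G y₀) (J' : ℕ) (hJ' : ∀ (p q : Y) (k : ℤ),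
    (∀ l, k - J' ≤ l → l ≤ k + J' → dist ((f ^ l) p) ((f ^ l) q) ≤ 4 * e) →
      dist ((f ^ k) p) ((f ^ k) q) < η / 2) (m i : ℤ) (y y' : Y) (hmi : m + J + J' ≤ i)
    (hy : dist ((f ^ m) y) y₀ < η / 2) (hy' : dist ((f ^ m) y') y₀ < η)
    (hd : ∀ k, m ≤ k → k ≤ i → dist ((f ^ k) y) ((f ^ k) y') ≤ e) :
    P.B e i y ⊆ P.B (3 * e) i y' := by
  rintro a ⟨u, rfl, hu⟩
  have h1 : dist ((f ^ m) (P.φ u)) ((f ^ m) y) < η / 2 :=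
    hJ' _ _ _ fun l hl hl' => by linarith [hu l (by omega)]
  have h2 : P.G ((f ^ m) (P.φ u)) = P.G ((f ^ m) y') := by
    rw [hG _ hy', hG]
    linarith [dist_triangle ((f ^ m) (P.φ u)) ((f ^ m) y) y₀]
  have h3 : P.cell ((P.σ ^ m) u) ∈ P.G ((f ^ m) (P.φ u)) :=
    ⟨_, rfl, (zpow_semi f P.σ P.φ P.semi m u).symm⟩
  rw [h2] at h3
  obtain ⟨s, hs, hs'⟩ := h3
  obtain ⟨v, hv1, hv2, -⟩ := P.splice_near J hJ he m i u y' (by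
      refine ⟨(P.σ ^ (-m)) s, by rw [zz]; simpa using hs, fun k hk => ?_⟩
      rw [← zpow_semi f P.σ P.φ P.semi, hs', zz, zz, show k + -m + m = k by ring, dist_self]
      linarith) (by omega) (fun k hk hk' => by
      linarith [hu k hk', hd k hk hk', dist_triangle ((f ^ k) (P.φ u)) ((f ^ k) y) ((f ^ k) y')])
  exact ⟨v, hv1 i (by omega), hv2⟩

theorem E_color [CompactSpace Y] (he : 0 < e) (N : ℕ) :
    ∃ (C : Type) (_ : Finite C) (col : Y → C), ∀ y y', col y = col y' → P.E N y y' := by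
  haveI := P.finA
  obtain ⟨t, ht, hcov⟩ := Metric.totallyBounded_iff.1 (isCompact_univ (X := Y)).totallyBounded
    (e / 2) (by linarith)
  have hex : ∀ y : Y, ∃ x : t, dist y x < e / 2 := fun y => by
    have := hcov (Set.mem_univ y)
    simp only [Set.mem_iUnion, Metric.mem_ball] at this
    obtain ⟨x, hx, h⟩ := this
    exact ⟨⟨x, hx⟩, h⟩
  choose b hb using hex
  haveI : Finite t := ht
  refine ⟨Set.Icc (-(N : ℤ)) N → Set P.A × t, inferInstance,
    fun y i => (P.B e i y, b ((f ^ (i : ℤ)) y)), fun y y' h m hm hm' => ?_⟩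
  have h1 := congrFun h ⟨m, hm, hm'⟩
  simp only [Prod.mk.injEq] at h1
  refine ⟨?_, ?_, ?_⟩
  · have h2 := hb ((f ^ m) y)
    have h3 := hb ((f ^ m) y')
    rw [← h1.2, dist_comm] at h3
    linarith [dist_triangle ((f ^ m) y) (b ((f ^ m) y)) ((f ^ m) y')]
  · rw [h1.1]; exact P.B_mono (by linarith) _ _
  · rw [← h1.1]; exact P.B_mono (by linarith) _ _

end Pres

theorem shiftE_zpow {A : Type*} (n : ℤ) (x : ℤ → A) (i : ℤ) : ((shiftE A) ^ n) x i = x (i + n) := by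
  induction n generalizing x with
  | zero => simp
  | succ n ih =>
    rw [zpow_add_one, Equiv.Perm.mul_apply, ih]
    change x _ = x _
    congr 1; ring
  | pred n ih =>
    rw [zpow_sub_one, Equiv.Perm.mul_apply, ih]
    change x _ = x _
    congr 1; ring

theorem exists_pres {Y : Type} [MetricSpace Y] (f : Equiv.Perm Y)
    (N : ℕ) (S : Set (ℤ → Fin N)) (hS : IsSFT S) (hinv : ShiftInvariant S)
    (φ : (ℤ → Fin N) → Y) (hφ : IsSubshiftFactorMap S f φ) (e : ℝ) (he : 0 < e) :
    Nonempty (Pres f e) := by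
  obtain ⟨Fw, hFw, hSeq⟩ := hS
  obtain ⟨hcont, hsurj, hsemi⟩ := hφ
  have hmem : ∀ x, x ∈ S ↔ ∀ w ∈ Fw, ¬ OccursIn w.2 x := fun x => by rw [hSeq]; exact Iff.rfl
  have hSclosed : IsClosed S := by
    rw [hSeq]
    have : {x : ℤ → Fin N | ∀ w ∈ Fw, ¬ OccursIn w.2 x} =
      ⋂ w ∈ Fw, ⋂ i : ℤ, (⋂ j : Fin w.1, {x : ℤ → Fin N | x (i + (j : ℤ)) = w.2 j})ᶜ := by
      ext x
      simp [OccursIn]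
    rw [this]
    refine isClosed_biInter fun w _ => isClosed_iInter fun i => ?_
    rw [isClosed_compl_iff]
    refine isOpen_iInter_of_finite fun j => ?_
    have hc : Continuous (fun x : ℤ → Fin N => x (i + (j : ℤ))) := continuous_apply _
    exact (isOpen_discrete {w.2 j}).preimage hc
  haveI : CompactSpace S := isCompact_iff_compactSpace.1 hSclosed.isCompact
  let ψ : S → Y := fun s => φ s
  have hψ : Continuous ψ := continuousOn_iff_continuous_restrict.1 hcont
  obtain ⟨L₁, hL₁⟩ : ∃ L : ℕ, ∀ s u : S, (∀ j : ℤ, -(L : ℤ) ≤ j → j ≤ L → s.1 j = u.1 j) →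
      dist (ψ s) (ψ u) < e := by
    obtain ⟨L, hL⟩ := nested_empty (fun L : ℕ => {x : S × S | e ≤ dist (ψ x.1) (ψ x.2) ∧
      ∀ l : ℤ, -(L : ℤ) ≤ l → l ≤ L → x.1.1 l = x.2.1 l})
      (by
        rintro n x ⟨ha, hb⟩
        exact ⟨ha, fun l hl hl' => hb l (by push_cast; omega) (by push_cast; omega)⟩)
      (by
        intro n
        simp only [Set.ofPred_and, Set.ofPred_forall]
        refine (isClosed_le continuous_const (by fun_prop)).inter ?_
        refine isClosed_iInter fun l => isClosed_iInter fun _ => isClosed_iInter fun _ => ?_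
        have hc : Continuous (fun x : S => x.1 l) :=
          (continuous_apply l).comp continuous_subtype_val
        exact isClosed_eq (hc.comp continuous_fst) (hc.comp continuous_snd))
      (by
        rw [Set.eq_empty_iff_forall_notMem]
        intro x hx
        rw [Set.mem_iInter] at hx
        have hne : x.1 = x.2 := by
          apply Subtype.ext
          funext l
          exact (hx l.natAbs).2 l (by omega) (by omega)
        have := (hx 0).1
        rw [hne, dist_self] at this
        linarith)
    refine ⟨L, fun s u h => ?_⟩
    by_contra! hcon
    have : (s, u) ∈ (∅ : Set (S × S)) := by
      rw [← hL]
      exact ⟨hcon, h⟩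
    exact this
  obtain ⟨L₂, hL₂⟩ : ∃ L : ℕ, ∀ w ∈ Fw, w.1 ≤ L := by
    obtain ⟨L, hL⟩ := (hFw.image (fun w => w.1)).bddAbove
    exact ⟨L, fun w hw => hL ⟨w, hw, rfl⟩⟩
  obtain ⟨L, hLL₁, hLL₂⟩ : ∃ L : ℕ, L₁ ≤ L ∧ L₂ ≤ L := ⟨max L₁ L₂, le_max_left _ _, le_max_right _ _⟩
  let σ : Equiv.Perm S :=
    { toFun := fun s => ⟨shiftE _ s.1, hinv.1 _ s.2⟩
      invFun := fun s => ⟨(shiftE _).symm s.1, hinv.2 _ s.2⟩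
      left_inv := fun s => by simp
      right_inv := fun s => by simp }
  have hσ : ∀ (n : ℤ) (s : S) (i : ℤ), ((σ ^ n) s).1 i = s.1 (i + n) := fun n s i => by
    rw [← shiftE_zpow n s.1 i, zpow_semi (shiftE (Fin N)) σ Subtype.val (fun _ => rfl)]
  let cell : S → (Set.Icc (-(L : ℤ)) L → Fin N) := fun s j => s.1 j
  have hcell : Continuous cell :=
    continuous_pi fun j => (continuous_apply (j : ℤ)).comp continuous_subtype_val
  have hcellσ : ∀ (n : ℤ) (s u : S), cell ((σ ^ n) s) = cell ((σ ^ n) u) ↔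
      ∀ j, n - L ≤ j → j ≤ n + L → s.1 j = u.1 j := fun n s u => by
    constructor
    · intro h j hj hj'
      have := congrFun h ⟨j - n, by omega, by omega⟩
      simp only [cell, hσ] at this
      simpa using this
    · intro h
      funext ⟨j, hj1, hj2⟩
      simp only [cell, hσ]
      exact h _ (by omega) (by omega)
  refine ⟨{ S := S, A := Set.Icc (-(L : ℤ)) L → Fin N, finA := inferInstance, σ := σ,
            cell := cell, φ := ψ, semi := ?_, surj := ?_, splice := ?_, small := ?_, closed := ?_ }⟩
  · intro s; exact (hsemi s.1 s.2).symm
  · intro y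
    have : y ∈ φ '' S := by rw [hsurj]; trivial
    obtain ⟨s, hs, h⟩ := this
    exact ⟨⟨s, hs⟩, h⟩
  · intro m s u h
    rw [hcellσ] at h
    let v : ℤ → Fin N := fun j => if j ≤ m then s.1 j else u.1 j
    have hvs : ∀ j ≤ m + L, v j = s.1 j := fun j hj => by
      by_cases hjm : j ≤ m
      · simp [v, hjm]
      · simp only [v, hjm, if_false]
        exact (h j (by omega) hj).symm
    have hvu : ∀ j ≥ m - L, v j = u.1 j := fun j hj => by
      by_cases hjm : j ≤ m
      · simp only [v, hjm, if_true]
        exact h j hj (by omega)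
      · simp [v, hjm]
    have hv : v ∈ S := by
      have hs := s.2
      have hu := u.2
      rw [hmem] at hs hu ⊢
      rintro w hw ⟨i, hi⟩
      have hwL := hL₂ w hw
      by_cases him : i ≤ m
      · refine hs w hw ⟨i, fun j => ?_⟩
        rw [← hi j, hvs]
        have := j.2
        omega
      · refine hu w hw ⟨i, fun j => ?_⟩
        rw [← hi j, hvu]
        omega
    refine ⟨⟨v, hv⟩, fun k hk => ?_, fun k hk => ?_⟩
    · rw [hcellσ]
      exact fun j hj hj' => hvs j (by omega)
    · rw [hcellσ]
      exact fun j hj hj' => hvu j (by omega)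
  · intro s u h
    refine (hL₁ s u fun j hj hj' => ?_).le
    exact congrFun h ⟨j, by omega, by omega⟩
  · intro a
    have h1 : IsClosed {s | cell s = a} := isClosed_eq hcell continuous_const
    exact (h1.isCompact.image hψ).isClosed

/-- The set of points whose backward orbit accumulates at `y₀`. -/
def RecSet {Y : Type} [MetricSpace Y] (f : Equiv.Perm Y) (y₀ : Y) : Set Y :=
  {y | ∀ ε > 0, ∀ k : ℕ, ∃ n : ℕ, k ≤ n ∧ dist ((f ^ (-(n : ℤ))) y) y₀ < ε}

theorem recSet_f {Y : Type} [MetricSpace Y] (f : Equiv.Perm Y) (y₀ y : Y) (h : y ∈ RecSet f y₀) :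
    f y ∈ RecSet f y₀ := by
  intro ε hε k
  obtain ⟨n, hn, hd⟩ := h ε hε k
  refine ⟨n + 1, by omega, ?_⟩
  have : (f ^ (-((n + 1 : ℕ) : ℤ))) (f y) = (f ^ (-(n : ℤ))) y := by
    have h1 : f y = (f ^ (1 : ℤ)) y := by simp
    rw [h1, zz]
    congr 2
    push_cast; ring
  rw [this]; exact hd

theorem recSet_symm {Y : Type} [MetricSpace Y] (f : Equiv.Perm Y) (y₀ y : Y)
    (h : y ∈ RecSet f y₀) : f.symm y ∈ RecSet f y₀ := by
  intro ε hε k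
  obtain ⟨n, hn, hd⟩ := h ε hε (k + 1)
  refine ⟨n - 1, by omega, ?_⟩
  have : (f ^ (-((n - 1 : ℕ) : ℤ))) (f.symm y) = (f ^ (-(n : ℤ))) y := by
    have h1 : f.symm y = (f ^ (-1 : ℤ)) y := by simp
    rw [h1, zz]
    congr 2
    omega
  rw [this]; exact hd

theorem recSet_residual {Y : Type} [MetricSpace Y] (f : Equiv.Perm Y) (h1 : Continuous f)
    (h2 : Continuous f.symm) (ht : TopTransitive f) (y₀ : Y) : RecSet f y₀ ∈ residual Y := by
  have key : ∀ j k : ℕ, {y | ∃ n : ℕ, k ≤ n ∧ dist ((f ^ (-(n : ℤ))) y) y₀ < 1 / ((j : ℝ) + 1)} ∈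
      residual Y := by
    intro j k
    apply residual_of_dense_open
    · have : {y | ∃ n : ℕ, k ≤ n ∧ dist ((f ^ (-(n : ℤ))) y) y₀ < 1 / ((j : ℝ) + 1)} =
        ⋃ n : ℕ, ⋃ _ : k ≤ n, {y | dist ((f ^ (-(n : ℤ))) y) y₀ < 1 / ((j : ℝ) + 1)} := by
        ext y; simp
      rw [this]
      refine isOpen_iUnion fun n => isOpen_iUnion fun _ => ?_
      have := continuous_zpow_perm f h1 h2 (-(n : ℤ))
      exact isOpen_lt (by fun_prop) continuous_const
    · rw [dense_iff_inter_open]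
      intro U hU hne
      have hc := continuous_zpow_perm f h1 h2 (k : ℤ)
      obtain ⟨u, hu⟩ := hne
      obtain ⟨n, v, hv1, hv2⟩ := ht ((f ^ (k : ℤ)) ⁻¹' U)
        (Metric.ball y₀ (1 / ((j : ℝ) + 1))) (hU.preimage hc) Metric.isOpen_ball
        ⟨(f ^ (-(k : ℤ))) u, by
          change (f ^ (k : ℤ)) ((f ^ (-(k : ℤ))) u) ∈ U
          rw [zz]; simpa using hu⟩
        ⟨y₀, Metric.mem_ball_self (by positivity)⟩
      refine ⟨(f ^ (k : ℤ)) ((f ^ (n : ℤ)) v), hv1, n + k, by omega, ?_⟩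
      rw [zz, zz, show -((n + k : ℕ) : ℤ) + k + n = 0 by push_cast; ring]
      simpa using hv2
  have : ∀ᶠ y in residual Y, ∀ j k : ℕ,
      ∃ n : ℕ, k ≤ n ∧ dist ((f ^ (-(n : ℤ))) y) y₀ < 1 / ((j : ℝ) + 1) := by
    rw [eventually_countable_forall]
    intro j
    rw [eventually_countable_forall]
    exact key j
  filter_upwards [this] with y hy ε hε k
  obtain ⟨j, hj⟩ := exists_nat_one_div_lt hε
  obtain ⟨n, hn, hd⟩ := hy j k
  exact ⟨n, hn, hd.trans hj⟩

theorem stmt6 {Y : Type} [MetricSpace Y] [CompactSpace Y] (f : Equiv.Perm Y)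
    (hY : FinitelyPresented f) (hYt : TopTransitive f) :
    ∃ (X : Type) (mX : MetricSpace X) (cX : CompactSpace X) (F : Equiv.Perm X),
      IsSmale F ∧ TopTransitive F ∧
      ∃ π : X → Y, IsFactorMap F f π ∧ UResolving F π ∧
        ∃ R ∈ residual Y, ∀ y ∈ R, ∃! x : X, π x = y := by
  obtain ⟨hf1, hf2, ⟨c, hc0, hc⟩, N₀, S, hS, hSinv, hSne, φ, hφ⟩ := hY
  obtain ⟨e, he, rfl⟩ : ∃ e : ℝ, 0 < e ∧ c = 4 * e := ⟨c / 4, by linarith, by ring⟩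
  obtain ⟨P⟩ := exists_pres f N₀ S hS hSinv φ hφ e he
  have hfz := continuous_zpow_perm f hf1 hf2
  have : Nonempty Y := ⟨φ hSne.some⟩
  obtain ⟨J, hJ⟩ := unif_exp f hf1 hf2 _ hc (e / 2) (by linarith)
  obtain ⟨y₀, η, hη, hG⟩ := P.exists_min
  obtain ⟨J', hJ'⟩ := unif_exp f hf1 hf2 _ hc (η / 2) (by linarith)
  set R := RecSet f y₀ with hRdef
  have hRres : R ∈ residual Y := recSet_residual f hf1 hf2 hYt y₀
  have hRdense : Dense R := dense_of_mem_residual hRres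
  have hRasym : ∀ y ∈ R, ∀ z, (∀ k ≤ (0 : ℤ), dist ((f ^ k) z) ((f ^ k) y) ≤ e) → z ∈ R := by
    intro y hy z hz ε hε k
    obtain ⟨J₁, hJ₁⟩ := unif_exp f hf1 hf2 _ hc (ε / 2) (by linarith)
    obtain ⟨n, hn, hd⟩ := hy (ε / 2) (by linarith) (max k J₁)
    have hn1 := le_of_max_le_left hn
    have hn2 := le_of_max_le_right hn
    refine ⟨n, hn1, ?_⟩
    have := hJ₁ z y (-(n : ℤ)) fun l hl hl' => by linarith [hz l (by omega)]
    linarith [dist_triangle ((f ^ (-(n : ℤ))) z) ((f ^ (-(n : ℤ))) y) y₀]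
  have hLT : ∀ y ∈ R, ∀ N : ℕ, ∀ᶠ y' in nhds y, P.E N y y' := by
    intro y hy N
    obtain ⟨n, hn, hd⟩ := hy (η / 2) (by linarith) (N + J + J')
    have ev1 : ∀ᶠ y' in nhds y, dist ((f ^ (-(n : ℤ))) y') y₀ < η / 2 := by
      have := hfz (-(n : ℤ))
      exact (isOpen_lt (f := fun y' => dist ((f ^ (-(n : ℤ))) y') y₀) (by fun_prop)
        continuous_const).mem_nhds hd
    have ev2 : ∀ᶠ y' in nhds y, ∀ k ∈ Set.Icc (-(n : ℤ)) N, dist ((f ^ k) y) ((f ^ k) y') < e := by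
      rw [Filter.eventually_all_finite (Set.finite_Icc _ _)]
      intro k _
      have := hfz k
      exact (isOpen_lt (f := fun y' => dist ((f ^ k) y) ((f ^ k) y')) (by fun_prop)
        continuous_const).mem_nhds (by simpa using he)
    filter_upwards [ev1, ev2] with y' h1 h2 m hm hm'
    refine ⟨(h2 m ⟨by omega, hm'⟩).le, ?_, ?_⟩
    · exact P.generic J hJ he y₀ η hG J' hJ' (-(n : ℤ)) m y y' (by omega) hd (by linarith)
        fun k hk hk' => (h2 k ⟨hk, by omega⟩).le
    · exact P.generic J hJ he y₀ η hG J' hJ' (-(n : ℤ)) m y' y (by omega) h1 (by linarith)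
        fun k hk hk' => by rw [dist_comm]; exact (h2 k ⟨hk, by omega⟩).le
  let g : Equiv.Perm R :=
    { toFun := fun y => ⟨f y.1, recSet_f f y₀ _ y.2⟩
      invFun := fun y => ⟨f.symm y.1, recSet_symm f y₀ _ y.2⟩
      left_inv := fun y => by simp
      right_inv := fun y => by simp }
  have hgz : ∀ (n : ℤ) (y : R), ((g ^ n) y).1 = (f ^ n) y.1 := fun n y =>
    (zpow_semi f g Subtype.val (fun _ => rfl) n y).symm
  obtain ⟨X, mX, cX, F, ι, π, hι, hFι, hF1, hF2, hπ, hπι, hd1, hd2⟩ :=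
    abstract_completion (R := R) (Y := Y) (fun N y y' => P.E N y.1 y'.1)
    (fun N y m _ _ => P.K_refl he m y.1)
    (fun N y y' h m hm hm' => P.K_symm (h m hm hm'))
    (fun N M hNM y y' h m hm hm' => h m (by omega) (by omega))
    (fun N => ⟨N + 2 * J, fun y₁ y₂ y₃ h h' => P.E_comp J hJ he N y₁ y₂ y₃ h h'⟩)
    (fun N => by
      obtain ⟨C, hC, col, h⟩ := P.E_color he N
      exact ⟨C, hC, fun y => col y.1, fun y y' h' => h _ _ h'⟩)
    g
    (fun N => ⟨N + 1, fun y y' h m hm hm' => by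
      have h1 : ∀ y : R, (g y).1 = (f ^ (1 : ℤ)) y.1 := fun y => by rw [zpow_one]; rfl
      simp only [h1]
      rw [P.K_shift]
      exact h _ (by push_cast; omega) (by push_cast; omega)⟩)
    (fun N => ⟨N + 1, fun y y' h m hm hm' => by
      have h1 : ∀ y : R, (g.symm y).1 = (f ^ (-1 : ℤ)) y.1 := fun y => by rw [zpow_neg_one]; rfl
      simp only [h1]
      rw [P.K_shift]
      exact h _ (by push_cast; omega) (by push_cast; omega)⟩)
    Subtype.val
    (fun ε hε => by
      obtain ⟨J₁, hJ₁⟩ := unif_exp f hf1 hf2 _ hc ε hε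
      refine ⟨J₁, fun y y' h => ?_⟩
      have := hJ₁ y.1 y'.1 0 fun l hl hl' => by
        linarith [(h l (by omega) (by omega)).1]
      simpa using this)
  have hFz := continuous_zpow_perm F hF1 hF2
  have hFιz : ∀ (n : ℤ) (y : R), (F ^ n) (ι y) = ι ((g ^ n) y) := zpow_semi F g ι hFι
  have happ : ∀ (x : X) (p : X → Prop), (∀ᶠ w in nhds x, p w) → ∃ y, p (ι y) := by
    intro x p hp
    obtain ⟨_, h, y, rfl⟩ := mem_closure_iff_nhds.1 (hι x) _ hp
    exact ⟨y, h⟩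
  have hclose : ∀ x x' : X, (∀ N : ℕ, ∀ U ∈ nhds x, ∀ U' ∈ nhds x', ∃ y y' : R,
      ι y ∈ U ∧ ι y' ∈ U' ∧ P.E N y.1 y'.1) → x = x' := by
    intro x x' h
    by_contra hne
    have hpos := dist_pos.2 hne
    obtain ⟨N, hN⟩ := hd1 (dist x x' / 3) (by linarith)
    obtain ⟨y, y', hy, hy', hE⟩ := h N (Metric.ball x (dist x x' / 3))
      (Metric.ball_mem_nhds _ (by linarith)) (Metric.ball x' (dist x x' / 3))
      (Metric.ball_mem_nhds _ (by linarith))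
    have h3 := hN _ _ hE
    rw [Metric.mem_ball, dist_comm] at hy
    rw [Metric.mem_ball] at hy'
    linarith [dist_triangle4 x (ι y) (ι y') x']
  obtain ⟨δ₀, hδ₀, hK0⟩ := hd2 0
  have hKm : ∀ (m : ℤ) (y y' : R), dist ((F ^ m) (ι y)) ((F ^ m) (ι y')) < δ₀ →
      P.K m y.1 y'.1 := by
    intro m y y' h
    rw [hFιz, hFιz] at h
    have := hK0 _ _ h 0 (by simp) (by simp)
    rw [hgz, hgz, P.K_shift, zero_add] at this
    exact this
  have hnearF : ∀ (n : ℤ) (x : X) (r : ℝ), 0 < r →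
      ∀ᶠ w in nhds x, dist ((F ^ n) w) ((F ^ n) x) < r := by
    intro n x r hr
    have := hFz n
    exact (isOpen_lt (f := fun w => dist ((F ^ n) w) ((F ^ n) x)) (by fun_prop)
        continuous_const).mem_nhds (by simpa using hr)
  have hexp : Expansive F (δ₀ / 2) := by
    intro x x' hne
    by_contra! hcon
    refine hne (hclose x x' fun N U hU U' hU' => ?_)
    have hev : ∀ x : X, ∀ᶠ w in nhds x, ∀ n ∈ Set.Icc (-(N : ℤ)) N,
        dist ((F ^ n) w) ((F ^ n) x) < δ₀ / 4 := fun x => by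
      rw [Filter.eventually_all_finite (Set.finite_Icc _ _)]
      exact fun n _ => hnearF n x _ (by linarith)
    obtain ⟨y, hyU, hy⟩ := happ x _ ((Filter.eventually_mem_set.2 hU).and (hev x))
    obtain ⟨y', hyU', hy'⟩ := happ x' _ ((Filter.eventually_mem_set.2 hU').and (hev x'))
    refine ⟨y, y', hyU, hyU', fun m hm hm' => hKm m y y' ?_⟩
    have h1 := hy m ⟨hm, hm'⟩
    have h2 := hy' m ⟨hm, hm'⟩
    rw [dist_comm] at h2
    linarith [hcon m, dist_triangle4 ((F ^ m) (ι y)) ((F ^ m) x) ((F ^ m) x') ((F ^ m) (ι y'))]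
  have hnb : ∀ (y : R) (U : Set X), IsOpen U → ι y ∈ U →
      ∃ O : Set Y, IsOpen O ∧ y.1 ∈ O ∧ ∀ y' : R, y'.1 ∈ O → ι y' ∈ U := by
    intro y U hU hy
    obtain ⟨r, hr, hball⟩ := Metric.isOpen_iff.1 hU _ hy
    obtain ⟨N, hN⟩ := hd1 r hr
    obtain ⟨O, hO, hOo, hyO⟩ := mem_nhds_iff.1 (hLT y.1 y.2 N)
    refine ⟨O, hOo, hyO, fun y' hy' => hball ?_⟩
    rw [Metric.mem_ball, dist_comm]
    exact hN y y' (hO hy')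
  have hsemi : ∀ x, π (F x) = f (π x) := by
    intro x
    have := hι.equalizer (hπ.comp hF1) (hf1.comp hπ) (by
      funext y
      simp only [Function.comp_apply]
      rw [hFι, hπι, hπι]; rfl)
    exact congrFun this x
  refine ⟨X, mX, cX, F, ⟨hF1, hF2, ⟨δ₀ / 2, by linarith, hexp⟩, ?_⟩, ?_, π,
    ⟨hπ, ?_, hsemi⟩, ?_, R, hRres, ?_⟩
  · -- canonical coordinates
    refine ⟨δ₀ / 4, by linarith, fun ε hε hε' => ?_⟩
    obtain ⟨N, hN⟩ := hd1 (ε / 2) (by linarith)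
    obtain ⟨δ, hδ, hE⟩ := hd2 (N + 4 * J)
    refine ⟨δ, hδ, fun x x' hxx' => ?_⟩
    have hgen : ∀ y y' : R, dist (ι y) (ι y') < δ → ∃ z : X, ∀ n : ℕ,
        dist ((F ^ (n : ℤ)) (ι y)) ((F ^ (n : ℤ)) z) ≤ ε / 2 ∧
        dist ((F ^ (-(n : ℤ))) (ι y')) ((F ^ (-(n : ℤ))) z) ≤ ε / 2 := by
      intro y y' h
      obtain ⟨z, hz1, hz2⟩ := P.bracket J hJ he N _ _ (hE _ _ h)
      have hzR : z ∈ R := hRasym y'.1 y'.2 z fun k hk => by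
        rw [dist_comm]; exact (hz1 k (by omega)).1
      refine ⟨ι ⟨z, hzR⟩, fun n => ⟨?_, ?_⟩⟩
      · rw [hFιz, hFιz]
        refine (hN _ _ fun m hm hm' => ?_).le
        rw [hgz, hgz, P.K_shift]
        exact hz2 _ (by omega)
      · rw [hFιz, hFιz]
        refine (hN _ _ fun m hm hm' => ?_).le
        rw [hgz, hgz, P.K_shift]
        exact hz1 _ (by omega)
    let Z : Set ((X × X) × X) := {q | ∀ n : ℕ,
        dist ((F ^ (n : ℤ)) q.1.1) ((F ^ (n : ℤ)) q.2) ≤ ε / 2 ∧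
        dist ((F ^ (-(n : ℤ))) q.1.2) ((F ^ (-(n : ℤ))) q.2) ≤ ε / 2}
    have hZ : IsClosed Z := by
      simp only [Z, Set.ofPred_and, Set.ofPred_forall]
      refine isClosed_iInter fun n => ?_
      have a1 := hFz (n : ℤ)
      have a2 := hFz (-(n : ℤ))
      exact (isClosed_le (by fun_prop) continuous_const).inter
        (isClosed_le (by fun_prop) continuous_const)
    have hZ' : IsClosed (Prod.fst '' Z) := isClosedMap_fst_of_compactSpace _ hZ
    have hmem : (x, x') ∈ Prod.fst '' Z := by
      rw [← hZ'.closure_eq, mem_closure_iff_nhds]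
      intro U hU
      have hop : {q : X × X | dist q.1 q.2 < δ} ∈ nhds (x, x') :=
        (isOpen_lt (by fun_prop) continuous_const).mem_nhds hxx'
      obtain ⟨_, ⟨hq1, hq2⟩, ⟨y, y'⟩, rfl⟩ :=
        mem_closure_iff_nhds.1 ((hι.prodMap hι) (x, x')) _ (Filter.inter_mem hU hop)
      obtain ⟨z, hz⟩ := hgen y y' hq2
      exact ⟨_, hq1, ⟨(ι y, ι y'), z⟩, hz, rfl⟩
    obtain ⟨⟨⟨a, b⟩, z⟩, hz, hab⟩ := hmem
    obtain ⟨rfl, rfl⟩ := Prod.mk.inj hab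
    refine ⟨z, ⟨fun n => by linarith [(hz n).1], fun n => by linarith [(hz n).2]⟩, ?_⟩
    rintro z' ⟨hz1, hz2⟩
    by_contra hne
    obtain ⟨n, hn⟩ := hexp _ _ hne
    rcases Int.eq_nat_or_neg n with ⟨k, rfl | rfl⟩
    · have h1 := hz1 k
      have h2 := (hz k).1
      simp only at h2
      rw [dist_comm] at h1
      linarith [dist_triangle ((F ^ (k : ℤ)) z') ((F ^ (k : ℤ)) a) ((F ^ (k : ℤ)) z)]
    · have h1 := hz2 k
      have h2 := (hz k).2
      simp only at h2
      rw [dist_comm] at h1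
      linarith [dist_triangle ((F ^ (-(k : ℤ))) z') ((F ^ (-(k : ℤ))) b) ((F ^ (-(k : ℤ))) z)]
  · -- transitivity
    rintro U V hU hV ⟨x₁, hx₁⟩ ⟨x₂, hx₂⟩
    obtain ⟨y₁, hy₁⟩ := happ x₁ (· ∈ U) (hU.mem_nhds hx₁)
    obtain ⟨y₂, hy₂⟩ := happ x₂ (· ∈ V) (hV.mem_nhds hx₂)
    obtain ⟨O₁, hO₁, hyO₁, h₁⟩ := hnb y₁ U hU hy₁
    obtain ⟨O₂, hO₂, hyO₂, h₂⟩ := hnb y₂ V hV hy₂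
    obtain ⟨n, hn⟩ := hYt O₁ O₂ hO₁ hO₂ ⟨_, hyO₁⟩ ⟨_, hyO₂⟩
    obtain ⟨v, ⟨hv1, hv2⟩, hvR⟩ :=
      hRdense.inter_open_nonempty _ ((hO₁.preimage (hfz n)).inter hO₂) hn
    refine ⟨n, ι ⟨v, hvR⟩, ?_, h₂ _ hv2⟩
    change (F ^ (n : ℤ)) (ι ⟨v, hvR⟩) ∈ U
    rw [hFιz]
    apply h₁
    rw [hgz]
    exact hv1
  · -- surjectivity
    have hcl : IsClosed (Set.range π) := (isCompact_range hπ).isClosed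
    have hsub : R ⊆ Set.range π := fun y hy => ⟨ι ⟨y, hy⟩, hπι _⟩
    intro y
    have := hcl.closure_subset_iff.2 hsub (hRdense y)
    exact this
  · -- u-resolving
    intro x₀ x hx x' hx' hπx
    have ht : Filter.Tendsto (fun n : ℕ => dist ((F ^ (-(n : ℤ))) x) ((F ^ (-(n : ℤ))) x'))
        Filter.atTop (nhds 0) := by
      have h1 : Filter.Tendsto (fun n : ℕ => dist ((F ^ (-(n : ℤ))) x₀) ((F ^ (-(n : ℤ))) x) +
        dist ((F ^ (-(n : ℤ))) x₀) ((F ^ (-(n : ℤ))) x')) Filter.atTop (nhds (0 + 0)) := hx.add hx'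
      rw [add_zero] at h1
      refine squeeze_zero (fun _ => dist_nonneg) (fun n => ?_) h1
      exact dist_triangle_left _ _ _
    obtain ⟨n₀, hn₀⟩ := Filter.eventually_atTop.1 (ht.eventually_lt_const (u := δ₀ / 3) (by linarith))
    refine hclose x x' fun N U hU U' hU' => ?_
    obtain ⟨M, hM1, hM2⟩ : ∃ M : ℕ, n₀ ≤ M ∧ N + J ≤ M := ⟨max n₀ (N + J), le_max_left _ _,
      le_max_right _ _⟩
    have hev : ∀ x : X, ∀ᶠ w in nhds x, ∀ n ∈ Set.Icc (-(M : ℤ)) M,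
        dist ((f ^ n) (π w)) ((f ^ n) (π x)) < e / 2 := fun x => by
      rw [Filter.eventually_all_finite (Set.finite_Icc _ _)]
      intro n _
      have := hfz n
      exact (isOpen_lt (f := fun w => dist ((f ^ n) (π w)) ((f ^ n) (π x))) (by fun_prop)
        continuous_const).mem_nhds (by simpa using he)
    obtain ⟨y, hyU, hy, hyM⟩ := happ x _ ((Filter.eventually_mem_set.2 hU).and
      ((hev x).and (hnearF (-(M : ℤ)) x (δ₀ / 3) (by linarith))))
    obtain ⟨y', hyU', hy', hyM'⟩ := happ x' _ ((Filter.eventually_mem_set.2 hU').and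
      ((hev x').and (hnearF (-(M : ℤ)) x' (δ₀ / 3) (by linarith))))
    have hd : ∀ k : ℤ, -(M : ℤ) ≤ k → k ≤ M → dist ((f ^ k) y.1) ((f ^ k) y'.1) ≤ e := by
      intro k hk hk'
      have a1 := hy k ⟨hk, hk'⟩
      have a2 := hy' k ⟨hk, hk'⟩
      rw [hπι] at a1 a2
      rw [← hπx, dist_comm] at a2
      linarith [dist_triangle ((f ^ k) y.1) ((f ^ k) (π x)) ((f ^ k) y'.1)]
    have hKM : P.K (-(M : ℤ)) y.1 y'.1 := by
      apply hKm
      have := hn₀ M hM1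
      rw [dist_comm] at hyM'
      linarith [dist_triangle4 ((F ^ (-(M : ℤ))) (ι y)) ((F ^ (-(M : ℤ))) x)
        ((F ^ (-(M : ℤ))) x') ((F ^ (-(M : ℤ))) (ι y'))]
    refine ⟨y, y', hyU, hyU', fun m hm hm' => ⟨hd m (by omega) (by omega), ?_, ?_⟩⟩
    · exact P.propagate J hJ he _ m _ _ hKM.2.1 (by omega) fun k hk hk' => hd k hk (by omega)
    · exact P.propagate J hJ he _ m _ _ hKM.2.2 (by omega) fun k hk hk' => by
        rw [dist_comm]; exact hd k hk (by omega)
  · -- injectivity over the residual set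
    intro y hy
    refine ⟨ι ⟨y, hy⟩, hπι _, fun x hx => ?_⟩
    symm
    refine hclose _ _ fun N U hU U' hU' => ?_
    have hev := hLT y hy N
    rw [← hx] at hev
    obtain ⟨y', hyU', hy'⟩ := happ x _ ((Filter.eventually_mem_set.2 hU').and
      (hπ.continuousAt.eventually hev))
    rw [hπι, hx] at hy'
    exact ⟨⟨y, hy⟩, y', mem_of_mem_nhds hU, hyU', hy'⟩
end
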